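/- Let A < B be real numbers, let α ∈ (0, 1/2) be a constant, and let φ : [A,B] → ℝ be Hölder continuous with exponent γ ∈ (0,1]. Define ψ(s) = cos²(πα) φ(s) − sin(πα) cos(πα) ((s−A)/(B−s))^α · H[ ((B−·)/(·−A))^α φ(·) ](s) for s ∈ (A,B). Then for every s ∈ (A,B) the principal value integrals involved exist and ψ(s) + tan(πα) H[ψ](s) = φ(s). -/

import Mathlib

open Filter Topology intervalIntegral

/-- The truncated approximants of the principal value integral `∫_A^B f(r)/(r−s) dr`. -/
noncomputable def pvApprox (A B : ℝ) (f : ℝ → ℝ) (s ε : ℝ) : ℝ :=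
  (∫ r in A..(s - ε), f r / (r - s)) + ∫ r in (s + ε)..B, f r / (r - s)

/-- The principal value integral `PV ∫_A^B f(r)/(r−s) dr` (junk value if the limit
does not exist). -/
noncomputable def pv (A B : ℝ) (f : ℝ → ℝ) (s : ℝ) : ℝ :=
  limUnder (𝓝[>] (0 : ℝ)) (pvApprox A B f s)

/-- The finite Hilbert transform `H[f](s) = (1/π) PV ∫_A^B f(r)/(r−s) dr`. -/
noncomputable def Hfin (A B : ℝ) (f : ℝ → ℝ) (s : ℝ) : ℝ :=
  (1 / Real.pi) * pv A B f s

section helpers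

open MeasureTheory Set

/-- The truncated integrals of an integrable function converge to the full integral. -/
theorem trunc_tendsto {A B s : ℝ} (hs : s ∈ Ioo A B) {f : ℝ → ℝ}
    (hf : IntervalIntegrable f volume A B) :
    Tendsto (fun ε => (∫ r in A..(s - ε), f r) + ∫ r in (s + ε)..B, f r) (𝓝[>] 0)
      (𝓝 (∫ r in A..B, f r)) := by
  have hAB : A < B := hs.1.trans hs.2
  have hi : IntegrableOn f (uIcc A B) volume := by
    rw [uIcc_of_le hAB.le, integrableOn_Icc_iff_integrableOn_Ioc]
    exact (intervalIntegrable_iff_integrableOn_Ioc_of_le hAB.le).1 hf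
  have hc := intervalIntegral.continuousOn_primitive_interval (μ := volume) hi
  have hcs : ContinuousAt (fun x => ∫ t in A..x, f t) s := by
    refine hc.continuousAt ?_
    rw [uIcc_of_le hAB.le]
    exact Icc_mem_nhds hs.1 hs.2
  have sub : ∀ x ∈ Icc A B, ∀ y ∈ Icc A B, IntervalIntegrable f volume x y := by
    intro x hx y hy
    apply hf.mono_set
    rw [uIcc_of_le hAB.le]
    exact Set.uIcc_subset_Icc hx hy
  have hA : A ∈ Icc A B := ⟨le_rfl, hAB.le⟩
  have hB : B ∈ Icc A B := ⟨hAB.le, le_rfl⟩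
  have t1 : Tendsto (fun ε : ℝ => s - ε) (𝓝[>] 0) (𝓝 s) := by
    have : Tendsto (fun ε : ℝ => s - ε) (𝓝 0) (𝓝 (s - 0)) := by
      apply Continuous.tendsto; fun_prop
    rw [sub_zero] at this
    exact this.mono_left nhdsWithin_le_nhds
  have t2 : Tendsto (fun ε : ℝ => s + ε) (𝓝[>] 0) (𝓝 s) := by
    have : Tendsto (fun ε : ℝ => s + ε) (𝓝 0) (𝓝 (s + 0)) := by
      apply Continuous.tendsto; fun_prop
    rw [add_zero] at this
    exact this.mono_left nhdsWithin_le_nhds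
  have T := (hcs.tendsto.comp t1).add ((tendsto_const_nhds (x := ∫ r in A..B, f r)).sub
    (hcs.tendsto.comp t2))
  have e : (∫ t in A..s, f t) + ((∫ r in A..B, f r) - ∫ t in A..s, f t) = ∫ r in A..B, f r := by
    ring
  rw [e] at T
  refine T.congr' ?_
  filter_upwards [t2.eventually (Icc_mem_nhds hs.1 hs.2)] with ε h2
  simp only [Function.comp]
  rw [← intervalIntegral.integral_add_adjacent_intervals (sub A hA (s + ε) h2) (sub _ h2 B hB)]
  ring

theorem div_sub_integrable_left {A B s ε : ℝ} (hs : s ∈ Ioo A B) (hε : 0 < ε) (hε1 : A < s - ε)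
    {u : ℝ → ℝ} (hu : IntervalIntegrable u volume A B) :
    IntervalIntegrable (fun r => u r / (r - s)) volume A (s - ε) := by
  have h1 : IntervalIntegrable u volume A (s - ε) := by
    apply hu.mono_set
    rw [uIcc_of_le (hs.1.trans hs.2).le, uIcc_of_le hε1.le]
    exact Icc_subset_Icc le_rfl (by linarith [hs.2])
  simp only [div_eq_mul_inv]
  apply h1.mul_continuousOn
  rw [uIcc_of_le hε1.le]
  apply ContinuousOn.inv₀ (by fun_prop)
  intro x hx h
  linarith [hx.2]

theorem div_sub_integrable_right {A B s ε : ℝ} (hs : s ∈ Ioo A B) (hε : 0 < ε) (hε1 : s + ε < B)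
    {u : ℝ → ℝ} (hu : IntervalIntegrable u volume A B) :
    IntervalIntegrable (fun r => u r / (r - s)) volume (s + ε) B := by
  have h1 : IntervalIntegrable u volume (s + ε) B := by
    apply hu.mono_set
    rw [uIcc_of_le (hs.1.trans hs.2).le, uIcc_of_le hε1.le]
    exact Icc_subset_Icc (by linarith [hs.1]) le_rfl
  simp only [div_eq_mul_inv]
  apply h1.mul_continuousOn
  rw [uIcc_of_le hε1.le]
  apply ContinuousOn.inv₀ (by fun_prop)
  intro x hx h
  linarith [hx.1]

theorem ev_small {A B s : ℝ} (hs : s ∈ Ioo A B) :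
    ∀ᶠ ε in 𝓝[>] (0:ℝ), 0 < ε ∧ A < s - ε ∧ s + ε < B := by
  have h : Ioo 0 (min (s - A) (B - s)) ∈ 𝓝[>] (0:ℝ) :=
    Ioo_mem_nhdsGT (lt_min (by linarith [hs.1]) (by linarith [hs.2]))
  filter_upwards [h] with ε h
  have := lt_min_iff.1 h.2
  exact ⟨h.1, by linarith, by linarith⟩

/-- Principal value of a product. -/
theorem pv_mul {A B s : ℝ} (hs : s ∈ Ioo A B) {u v : ℝ → ℝ} {c L : ℝ}
    (hu : IntervalIntegrable u volume A B)
    (hL : Tendsto (pvApprox A B u s) (𝓝[>] 0) (𝓝 L))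
    (hi : IntervalIntegrable (fun r => (v r - c) * u r / (r - s)) volume A B) :
    Tendsto (pvApprox A B (fun r => v r * u r) s) (𝓝[>] 0)
      (𝓝 (c * L + ∫ r in A..B, (v r - c) * u r / (r - s))) := by
  have T := (hL.const_mul c).add (trunc_tendsto hs hi)
  refine T.congr' ?_
  filter_upwards [ev_small hs] with ε hε
  obtain ⟨h0, h1, h2⟩ := hε
  have sub1 : IntervalIntegrable (fun r => (v r - c) * u r / (r - s)) volume A (s - ε) := by
    apply hi.mono_set
    rw [uIcc_of_le (hs.1.trans hs.2).le, uIcc_of_le h1.le]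
    exact Icc_subset_Icc le_rfl (by linarith [hs.2])
  have sub2 : IntervalIntegrable (fun r => (v r - c) * u r / (r - s)) volume (s + ε) B := by
    apply hi.mono_set
    rw [uIcc_of_le (hs.1.trans hs.2).le, uIcc_of_le h2.le]
    exact Icc_subset_Icc (by linarith [hs.1]) le_rfl
  have e : ∀ r, v r * u r / (r - s) = c * (u r / (r - s)) + (v r - c) * u r / (r - s) := by
    intro r; ring
  unfold pvApprox
  simp only [e]
  rw [intervalIntegral.integral_add ((div_sub_integrable_left hs h0 h1 hu).const_mul c) sub1,
    intervalIntegral.integral_add ((div_sub_integrable_right hs h0 h2 hu).const_mul c) sub2,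
    intervalIntegral.integral_const_mul, intervalIntegral.integral_const_mul]
  ring

theorem pv_one {A B s : ℝ} (hs : s ∈ Ioo A B) :
    Tendsto (pvApprox A B (fun _ => 1) s) (𝓝[>] 0) (𝓝 (Real.log ((B - s) / (s - A)))) := by
  refine tendsto_const_nhds.congr' ?_
  filter_upwards [ev_small hs] with ε hε
  obtain ⟨h0, h1, h2⟩ := hε
  unfold pvApprox
  rw [intervalIntegral.integral_comp_sub_right (fun x => 1 / x) s,
    intervalIntegral.integral_comp_sub_right (fun x => 1 / x) s,
    integral_one_div_of_neg (by linarith) (by linarith),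
    integral_one_div_of_pos (by linarith) (by linarith), Real.log_div, Real.log_div, Real.log_div,
    show s - ε - s = - ε by ring, show s + ε - s = ε by ring, show A - s = -(s - A) by ring,
    Real.log_neg_eq_log, Real.log_neg_eq_log]
  · ring
  all_goals linarith [hs.1, hs.2]

theorem pv_reflect {A B s ε : ℝ} (f : ℝ → ℝ) :
    pvApprox A B (fun r => f (A + B - r)) s ε = - pvApprox A B f (A + B - s) ε := by
  unfold pvApprox
  have e : ∀ r, f (A + B - r) / (r - s) =
      -((fun x => f x / (x - (A + B - s))) (A + B - r)) := by
    intro r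
    simp only
    rw [show A + B - r - (A + B - s) = -(r - s) by ring, div_neg, neg_neg]
  simp only [e]
  rw [intervalIntegral.integral_neg, intervalIntegral.integral_neg,
    intervalIntegral.integral_comp_sub_left (fun x => f x / (x - (A + B - s))),
    intervalIntegral.integral_comp_sub_left (fun x => f x / (x - (A + B - s)))]
  rw [show A + B - (s - ε) = A + B - s + ε by ring, show A + B - (s + ε) = A + B - s - ε by ring,
    show A + B - A = B by ring, show A + B - B = A by ring]
  ring

/-- the Möbius map from the half line to `(A,B)` -/
theorem rho_image {A B : ℝ} (hAB : A < B) :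
    (fun x => (A + B * x) / (1 + x)) '' Ioi (0:ℝ) = Ioo A B := by
  ext r
  constructor
  · rintro ⟨x, hx, rfl⟩
    have hx' : (0:ℝ) < x := hx
    constructor
    · simp only; rw [lt_div_iff₀ (by linarith)]; nlinarith
    · simp only; rw [div_lt_iff₀ (by linarith)]; nlinarith
  · intro hr
    have h1 : 0 < B - r := by linarith [hr.2]
    have h2 : 0 < r - A := by linarith [hr.1]
    have h3 : 0 < B - A := by linarith
    refine ⟨(r - A) / (B - r), div_pos h2 h1, ?_⟩
    have : 1 + (r - A) / (B - r) = (B - A) / (B - r) := by field_simp; ring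
    simp only
    rw [this]
    field_simp
    ring

theorem rho_deriv {A B x : ℝ} (hx : 0 < x) :
    HasDerivAt (fun x => (A + B * x) / (1 + x)) ((B - A) / (1 + x) ^ 2) x := by
  have h1 : HasDerivAt (fun x : ℝ => A + B * x) B x := by
    simpa using ((hasDerivAt_id x).const_mul B).const_add A
  have h2 : HasDerivAt (fun x : ℝ => 1 + x) 1 x := by
    simpa using (hasDerivAt_id x).const_add 1
  have h3 : (1 + x) ≠ 0 := by linarith
  refine (h1.div h2 h3).congr_deriv ?_
  congr 1
  ring

theorem rho_inj {A B : ℝ} (hAB : A < B) :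
    InjOn (fun x => (A + B * x) / (1 + x)) (Ioi (0:ℝ)) := by
  intro x hx y hy h
  have hx' : (0:ℝ) < x := hx
  have hy' : (0:ℝ) < y := hy
  simp only at h
  rw [div_eq_div_iff (by linarith) (by linarith)] at h
  have : (B - A) * (x - y) = 0 := by linarith
  rcases mul_eq_zero.1 this with h | h <;> linarith

theorem cov_integral {A B : ℝ} (hAB : A < B) (f : ℝ → ℝ) :
    ∫ r in Ioo A B, f r =
      ∫ x in Ioi (0:ℝ), (B - A) / (1 + x) ^ 2 * f ((A + B * x) / (1 + x)) := by
  rw [← rho_image hAB, integral_image_eq_integral_abs_deriv_smul measurableSet_Ioi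
    (fun x hx => (rho_deriv hx).hasDerivWithinAt) (rho_inj hAB)]
  apply setIntegral_congr_fun measurableSet_Ioi
  intro x hx
  simp only [smul_eq_mul]
  rw [abs_of_nonneg (by have : 0 < B - A := by linarith
                        positivity)]

theorem cov_integrable {A B : ℝ} (hAB : A < B) (f : ℝ → ℝ) :
    IntegrableOn f (Ioo A B) ↔
      IntegrableOn (fun x => (B - A) / (1 + x) ^ 2 * f ((A + B * x) / (1 + x))) (Ioi (0:ℝ)) := by
  rw [← rho_image hAB, integrableOn_image_iff_integrableOn_abs_deriv_smul measurableSet_Ioi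
    (fun x hx => (rho_deriv hx).hasDerivWithinAt) (rho_inj hAB)]
  apply integrableOn_congr_fun _ measurableSet_Ioi
  intro x hx
  simp only [smul_eq_mul]
  rw [abs_of_nonneg (by have : 0 < B - A := by linarith
                        positivity)]

theorem intOn_of_bound {S : Set ℝ} (hS : MeasurableSet S) {f g : ℝ → ℝ} (hf : Measurable f)
    (hg : IntegrableOn g S) (h : ∀ x ∈ S, |f x| ≤ g x) : IntegrableOn f S := by
  refine Integrable.mono' hg hf.aestronglyMeasurable ?_
  filter_upwards [ae_restrict_mem hS] with x hx
  exact h x hx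

theorem beta_real {α : ℝ} (h0 : 0 < α) (h1 : α < 1) :
    IntegrableOn (fun t : ℝ => t ^ (-α) * (1 - t) ^ (α - 1)) (Ioo 0 1) ∧
    ∫ t in Ioo (0:ℝ) 1, t ^ (-α) * (1 - t) ^ (α - 1) = Real.pi / Real.sin (Real.pi * α) := by
  have hc := Complex.betaIntegral_convergent (u := ((1 - α : ℝ) : ℂ)) (v := (α : ℂ))
    (by rw [Complex.ofReal_re]; linarith) (by rw [Complex.ofReal_re]; linarith)
  have hv := Complex.Gamma_mul_Gamma_eq_betaIntegral (s := ((1 - α : ℝ) : ℂ)) (t := (α : ℂ))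
    (by rw [Complex.ofReal_re]; linarith) (by rw [Complex.ofReal_re]; linarith)
  unfold Complex.betaIntegral at hv
  rw [intervalIntegrable_iff_integrableOn_Ioo_of_le zero_le_one] at hc
  rw [intervalIntegral.integral_of_le zero_le_one, integral_Ioc_eq_integral_Ioo] at hv
  have e : EqOn (fun x : ℝ => (x : ℂ) ^ (((1 - α : ℝ) : ℂ) - 1) * (1 - (x : ℂ)) ^ ((α : ℂ) - 1))
      (fun x : ℝ => ((x ^ (-α) * (1 - x) ^ (α - 1) : ℝ) : ℂ)) (Ioo 0 1) := by
    intro x hx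
    simp only
    rw [Complex.ofReal_mul, Complex.ofReal_cpow hx.1.le, Complex.ofReal_cpow (by linarith [hx.2])]
    push_cast
    congr 2
    ring
  rw [setIntegral_congr_fun measurableSet_Ioo e, integral_complex_ofReal] at hv
  rw [integrableOn_congr_fun e measurableSet_Ioo] at hc
  refine ⟨by rw [IntegrableOn] at hc ⊢; simpa using hc.re, ?_⟩
  have h2 := Real.Gamma_mul_Gamma_one_sub α
  rw [← h2]
  rw [Complex.Gamma_ofReal, Complex.Gamma_ofReal, ← Complex.ofReal_add,
    show 1 - α + α = 1 by ring, Complex.Gamma_ofReal, Real.Gamma_one] at hv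
  norm_cast at hv
  rw [one_mul] at hv
  rw [← hv, mul_comm]

theorem M_aux {α x : ℝ} (hx : 0 < x) :
    (1 - 0) / (1 + x) ^ 2 * (((0 + 1 * x) / (1 + x)) ^ (-α) *
      (1 - (0 + 1 * x) / (1 + x)) ^ (α - 1)) = x ^ (-α) / (1 + x) := by
  have h : 0 < 1 + x := by linarith
  rw [show 1 - (0 + 1 * x) / (1 + x) = (1 + x)⁻¹ by field_simp; ring, zero_add, one_mul,
    Real.div_rpow hx.le h.le, Real.inv_rpow h.le, Real.rpow_neg h.le α, Real.rpow_sub h,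
    Real.rpow_one]
  have : 0 < (1 + x) ^ α := Real.rpow_pos_of_pos h _
  field_simp
  ring

theorem M_int {α : ℝ} (h0 : 0 < α) (h1 : α < 1) :
    IntegrableOn (fun x : ℝ => x ^ (-α) / (1 + x)) (Ioi 0) := by
  have := (beta_real h0 h1).1
  rw [cov_integrable zero_lt_one] at this
  refine (integrableOn_congr_fun ?_ measurableSet_Ioi).1 this
  intro x hx
  exact M_aux hx

theorem M_val {α : ℝ} (h0 : 0 < α) (h1 : α < 1) :
    ∫ x in Ioi (0:ℝ), x ^ (-α) / (1 + x) = Real.pi / Real.sin (Real.pi * α) := by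
  rw [← (beta_real h0 h1).2, cov_integral zero_lt_one]
  apply setIntegral_congr_fun measurableSet_Ioi
  intro x hx
  exact (M_aux hx).symm

theorem rpow_int01 {p : ℝ} (hp : -1 < p) : IntegrableOn (fun x : ℝ => x ^ p) (Ioo 0 1) :=
  (intervalIntegrable_iff_integrableOn_Ioo_of_le zero_le_one).1
    (intervalIntegral.intervalIntegrable_rpow' hp)

theorem rpow_val01 {p : ℝ} (hp : -1 < p) : ∫ x in Ioo (0:ℝ) 1, x ^ p = 1 / (p + 1) := by
  rw [← integral_Ioc_eq_integral_Ioo, ← intervalIntegral.integral_of_le zero_le_one,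
    integral_rpow (Or.inl hp), Real.one_rpow, Real.zero_rpow (by linarith), sub_zero]

theorem C1_bound {α z : ℝ} (h0 : 0 < α) (h1 : α < 1 / 2) (hz : z ∈ Ioo (0:ℝ) 1) :
    |(z ^ (-α) - z ^ α) / (1 - z)| ≤ z ^ (-α) := by
  have hp : 0 < z ^ (-α) := Real.rpow_pos_of_pos hz.1 _
  have h2 : z ^ α ≤ 1 := Real.rpow_le_one hz.1.le hz.2.le h0.le
  have h3 : 1 ≤ z ^ (-α) := Real.one_le_rpow_of_pos_of_le_one_of_nonpos hz.1 hz.2.le (by linarith)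
  have hd : 0 < 1 - z := by linarith [hz.2]
  rw [abs_of_nonneg (div_nonneg (by linarith) hd.le), div_le_iff₀ hd]
  have h4 : z ^ (-α) * z ≤ z ^ α := by
    have : z ^ (-α) * z = z ^ (1 - α) := by
      rw [sub_eq_add_neg, Real.rpow_add hz.1, Real.rpow_one, mul_comm]
    rw [this]
    exact Real.rpow_le_rpow_of_exponent_ge hz.1 hz.2.le (by linarith)
  nlinarith

theorem C1_val {α : ℝ} (h0 : 0 < α) (h1 : α < 1 / 2) :
    ∫ z in Ioo (0:ℝ) 1, (z ^ (-α) - z ^ α) / (1 - z) =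
      1 / α - Real.pi * Real.cot (Real.pi * α) := by
  have hn : (α : ℂ) ∈ Complex.integerComplement := by
    rintro ⟨n, hn⟩
    have : (n : ℝ) = α := by exact_mod_cast hn
    have a1 : (0:ℝ) < n := by linarith
    have a2 : (n : ℝ) < 1 := by linarith
    have a3 : 0 < n := by exact_mod_cast a1
    have a4 : n < 1 := by exact_mod_cast a2
    omega
  have hs := cot_series_rep' hn
  have hsum := summable_cotTerm hn
  have e1 : ∀ n : ℕ, cotTerm (α : ℂ) n =
      ((1 / (α - (n + 1)) + 1 / (α + (n + 1)) : ℝ) : ℂ) := by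
    intro n; simp [cotTerm]
  have hs' : Real.pi * Real.cot (Real.pi * α) - 1 / α =
      ∑' n : ℕ, (1 / (α - (n + 1)) + 1 / (α + (n + 1)) : ℝ) := by
    have : ((Real.pi * Real.cot (Real.pi * α) - 1 / α : ℝ) : ℂ) =
      ((∑' n : ℕ, (1 / (α - (n + 1)) + 1 / (α + (n + 1)) : ℝ) : ℝ) : ℂ) := by
      push_cast
      exact hs
    exact_mod_cast this
  have hsum' : Summable fun n : ℕ => (1 / (α - (n + 1)) + 1 / (α + (n + 1)) : ℝ) := by
    rw [← Complex.summable_ofReal]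
    exact hsum.congr e1
  set F : ℕ → ℝ → ℝ := fun n z => z ^ ((n:ℝ) - α) - z ^ ((n:ℝ) + α) with hF
  have i1 : ∀ n : ℕ, IntegrableOn (fun z : ℝ => z ^ ((n:ℝ) - α)) (Ioo 0 1) := fun n =>
    rpow_int01 (by have : (0:ℝ) ≤ n := n.cast_nonneg
                   linarith)
  have i2 : ∀ n : ℕ, IntegrableOn (fun z : ℝ => z ^ ((n:ℝ) + α)) (Ioo 0 1) := fun n =>
    rpow_int01 (by have : (0:ℝ) ≤ n := n.cast_nonneg
                   linarith)
  have hFint : ∀ n, IntegrableOn (F n) (Ioo 0 1) := fun n => (i1 n).sub (i2 n)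
  have hFval : ∀ n, ∫ z in Ioo (0:ℝ) 1, F n z =
      -(1 / (α - (n + 1)) + 1 / (α + (n + 1)) : ℝ) := by
    intro n
    have hn0 : (0:ℝ) ≤ n := n.cast_nonneg
    rw [integral_sub (i1 n) (i2 n), rpow_val01 (by linarith), rpow_val01 (by linarith),
      show α - ((n:ℝ) + 1) = -(n - α + 1) by ring, show α + ((n:ℝ) + 1) = n + α + 1 by ring,
      div_neg]
    ring
  have hFnn : ∀ n, ∫ z in Ioo (0:ℝ) 1, ‖F n z‖ = ∫ z in Ioo (0:ℝ) 1, F n z := by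
    intro n
    apply setIntegral_congr_fun measurableSet_Ioo
    intro z hz
    simp only [hF, Real.norm_eq_abs]
    apply abs_of_nonneg
    have := Real.rpow_le_rpow_of_exponent_ge hz.1 hz.2.le
      (show (n:ℝ) - α ≤ n + α by linarith)
    linarith
  have key := integral_tsum_of_summable_integral_norm hFint (by
    simp only [hFnn, hFval]; exact hsum'.neg)
  simp only [hFval] at key
  rw [tsum_neg, ← hs'] at key
  have : ∫ z in Ioo (0:ℝ) 1, (z ^ (-α) - z ^ α) / (1 - z) =
      ∫ z in Ioo (0:ℝ) 1, ∑' n, F n z := by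
    apply setIntegral_congr_fun measurableSet_Ioo
    intro z hz
    have : ∀ n, F n z = (z ^ (-α) - z ^ α) * z ^ n := by
      intro n
      simp only [hF]
      rw [sub_eq_add_neg (n:ℝ) α, Real.rpow_add hz.1, Real.rpow_add hz.1, Real.rpow_natCast]
      ring
    simp only [this]
    rw [tsum_mul_left, tsum_geometric_of_lt_one hz.1.le hz.2, div_eq_mul_inv]
  rw [this, ← key]
  ring

theorem G_bound {α z : ℝ} (h0 : 0 < α) (h1 : α < 1 / 2) (hz : z ∈ Ioo (0:ℝ) 1) :
    |(1 - z ^ (-α)) / (1 - z)| ≤ z ^ (-α) := by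
  have hp : 0 < z ^ (-α) := Real.rpow_pos_of_pos hz.1 _
  have h3 : 1 ≤ z ^ (-α) := Real.one_le_rpow_of_pos_of_le_one_of_nonpos hz.1 hz.2.le (by linarith)
  have hd : 0 < 1 - z := by linarith [hz.2]
  rw [abs_div, abs_of_nonpos (by linarith : 1 - z ^ (-α) ≤ 0), abs_of_pos hd, div_le_iff₀ hd]
  have h4 : z ^ (-α) * z ≤ 1 := by
    have : z ^ (-α) * z = z ^ (1 - α) := by
      rw [sub_eq_add_neg, Real.rpow_add hz.1, Real.rpow_one, mul_comm]
    rw [this]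
    exact Real.rpow_le_one hz.1.le hz.2.le (by linarith)
  nlinarith

theorem inv_image01 : (fun x : ℝ => x⁻¹) '' Ioo 0 1 = Ioi 1 := by
  ext y
  constructor
  · rintro ⟨x, hx, rfl⟩
    exact (one_lt_inv₀ hx.1).2 hx.2
  · intro hy
    have hy' : (1:ℝ) < y := hy
    exact ⟨y⁻¹, ⟨by positivity, inv_lt_one_of_one_lt₀ hy'⟩, inv_inv y⟩

theorem G_all {α : ℝ} (h0 : 0 < α) (h1 : α < 1 / 2) :
    IntegrableOn (fun z : ℝ => (z ^ (-α) - 1) / (z - 1) + 1 / (1 + z)) (Ioi 0) ∧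
    ∫ z in Ioi (0:ℝ), ((z ^ (-α) - 1) / (z - 1) + 1 / (1 + z)) =
      Real.pi * Real.cot (Real.pi * α) := by
  set g : ℝ → ℝ := fun z => (z ^ (-α) - 1) / (z - 1) + 1 / (1 + z) with hg
  have ia : IntegrableOn (fun z : ℝ => (1 - z ^ (-α)) / (1 - z)) (Ioo 0 1) :=
    intOn_of_bound measurableSet_Ioo (by fun_prop) (rpow_int01 (by linarith : -1 < -α))
      (fun z hz => G_bound h0 h1 hz)
  have ic : IntegrableOn (fun z : ℝ => (z ^ (-α) - z ^ α) / (1 - z)) (Ioo 0 1) :=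
    intOn_of_bound measurableSet_Ioo (by fun_prop) (rpow_int01 (by linarith : -1 < -α))
      (fun z hz => C1_bound h0 h1 hz)
  have ib : IntegrableOn (fun z : ℝ => 1 / (1 + z)) (Ioo 0 1) := by
    refine intOn_of_bound measurableSet_Ioo (g := fun _ => 1) (by fun_prop) (by simp) ?_
    intro z hz
    rw [abs_of_nonneg (by have := hz.1; positivity), div_le_one (by linarith [hz.1])]
    linarith [hz.1]
  have id : IntegrableOn (fun z : ℝ => z ^ (α - 1)) (Ioo 0 1) := rpow_int01 (by linarith)
  have e1 : EqOn (fun z : ℝ => (1 - z ^ (-α)) / (1 - z) + 1 / (1 + z)) g (Ioo 0 1) := by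
    intro z hz
    simp only [hg]
    rw [← neg_sub (z ^ (-α)), ← neg_sub z, neg_div_neg_eq]
  have g1 : IntegrableOn g (Ioo 0 1) := (integrableOn_congr_fun e1 measurableSet_Ioo).1 (ia.add ib)
  have e2 : EqOn (fun z : ℝ => z ^ (α - 1) - (z ^ (-α) - z ^ α) / (1 - z) -
      ((1 - z ^ (-α)) / (1 - z) + 1 / (1 + z))) (fun z => |-(z ^ 2)⁻¹| • g z⁻¹) (Ioo 0 1) := by
    intro z hz
    have hz0 := hz.1
    have hz1 : 1 - z ≠ 0 := by linarith [hz.2]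
    have hz2 : 1 + z ≠ 0 := by linarith [hz.1]
    have hz3 : 1 - z = 1 - z := rfl
    simp only [hg, smul_eq_mul]
    rw [abs_neg, abs_of_pos (by positivity), Real.inv_rpow hz0.le, Real.rpow_neg hz0.le α, inv_inv,
      Real.rpow_sub hz0, Real.rpow_one]
    have hp : 0 < z ^ α := Real.rpow_pos_of_pos hz0 _
    have a1 : z⁻¹ - 1 = (1 - z) / z := by field_simp
    have a2 : 1 + z⁻¹ = (1 + z) / z := by field_simp; ring
    rw [a1, a2]
    field_simp
    ring
  have hd : ∀ x ∈ Ioo (0:ℝ) 1, HasDerivWithinAt (fun x : ℝ => x⁻¹) (-(x ^ 2)⁻¹) (Ioo 0 1) x :=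
    fun x hx => (hasDerivAt_inv hx.1.ne').hasDerivWithinAt
  have hi : InjOn (fun x : ℝ => x⁻¹) (Ioo 0 1) := inv_injective.injOn
  have j := (id.sub ic).sub (ia.add ib)
  have g2 : IntegrableOn g (Ioi 1) := by
    rw [← inv_image01, integrableOn_image_iff_integrableOn_abs_deriv_smul measurableSet_Ioo hd hi]
    exact (integrableOn_congr_fun e2 measurableSet_Ioo).1 j
  have g1' : IntegrableOn g (Ioc 0 1) := by
    rw [integrableOn_Ioc_iff_integrableOn_Ioo]; exact g1
  have v2 : ∫ z in Ioi (1:ℝ), g z = 1 / α - (1 / α - Real.pi * Real.cot (Real.pi * α)) -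
      ∫ z in Ioo (0:ℝ) 1, g z := by
    rw [← inv_image01, integral_image_eq_integral_abs_deriv_smul measurableSet_Ioo hd hi,
      ← setIntegral_congr_fun measurableSet_Ioo e2,
      ← setIntegral_congr_fun measurableSet_Ioo e1, ← C1_val h0 h1]
    have q1 := integral_sub (μ := volume.restrict (Ioo (0:ℝ) 1)) (id.sub ic) (ia.add ib)
    have q2 := integral_sub (μ := volume.restrict (Ioo (0:ℝ) 1)) id ic
    simp only [Pi.sub_apply, Pi.add_apply] at q1 q2
    rw [q1, q2, rpow_val01 (by linarith)]
    simp
  constructor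
  · rw [← Ioc_union_Ioi_eq_Ioi zero_le_one]
    exact g1'.union g2
  · rw [← Ioc_union_Ioi_eq_Ioi zero_le_one, setIntegral_union (by simp) measurableSet_Ioi g1' g2, v2,
      integral_Ioc_eq_integral_Ioo]
    ring

theorem inv_sq_int : IntegrableOn (fun x : ℝ => 1 / (1 + x) ^ 2) (Ioi 0) := by
  have h : IntegrableOn (fun _ : ℝ => (1:ℝ)) (Ioo 0 1) := by simp
  rw [cov_integrable zero_lt_one] at h
  simpa using h

theorem Msc {α y : ℝ} (h0 : 0 < α) (h1 : α < 1) (hy : 0 < y) :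
    IntegrableOn (fun z : ℝ => z ^ (-α) / (1 + y * z)) (Ioi 0) ∧
    ∫ z in Ioi (0:ℝ), z ^ (-α) / (1 + y * z) =
      y ^ (α - 1) * (Real.pi / Real.sin (Real.pi * α)) := by
  have hyp : 0 < y ^ α := Real.rpow_pos_of_pos hy _
  have e : EqOn (fun z : ℝ => z ^ (-α) / (1 + y * z))
      (fun z => y ^ α * ((fun x : ℝ => x ^ (-α) / (1 + x)) (y * z))) (Ioi 0) := by
    intro z hz
    have hz' : (0:ℝ) < z := hz
    simp only
    rw [Real.mul_rpow hy.le hz'.le, Real.rpow_neg hy.le]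
    field_simp
  constructor
  · rw [integrableOn_congr_fun e measurableSet_Ioi]
    apply Integrable.const_mul
    have := (integrableOn_Ioi_comp_mul_left_iff (fun x : ℝ => x ^ (-α) / (1 + x)) 0 hy).2
      (by rw [mul_zero]; exact M_int h0 h1)
    exact this
  · rw [setIntegral_congr_fun measurableSet_Ioi e, MeasureTheory.integral_const_mul,
      integral_comp_mul_left_Ioi (fun x : ℝ => x ^ (-α) / (1 + x)) 0 hy, mul_zero, M_val h0 h1,
      smul_eq_mul, Real.rpow_sub hy, Real.rpow_one]
    ring

theorem Msc' {α y : ℝ} (h0 : 0 < α) (h1 : α < 1) (hy : 0 < y) :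
    IntegrableOn (fun z : ℝ => z ^ (-α) / (z + y)) (Ioi 0) ∧
    ∫ z in Ioi (0:ℝ), z ^ (-α) / (z + y) =
      y ^ (-α) * (Real.pi / Real.sin (Real.pi * α)) := by
  have hyp : 0 < y ^ α := Real.rpow_pos_of_pos hy _
  obtain ⟨a, b⟩ := Msc h0 h1 (inv_pos.2 hy)
  have e : EqOn (fun z : ℝ => z ^ (-α) / (z + y))
      (fun z => y⁻¹ * (z ^ (-α) / (1 + y⁻¹ * z))) (Ioi 0) := by
    intro z hz
    have hz' : (0:ℝ) < z := hz
    have : z + y ≠ 0 := by positivity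
    have h2 : 1 + y⁻¹ * z = (z + y) / y := by field_simp; ring
    simp only
    rw [h2]
    field_simp
  constructor
  · rw [integrableOn_congr_fun e measurableSet_Ioi]
    exact a.const_mul _
  · rw [setIntegral_congr_fun measurableSet_Ioi e, MeasureTheory.integral_const_mul, b, Real.inv_rpow hy.le,
      Real.rpow_sub hy, Real.rpow_one, Real.rpow_neg hy.le]
    field_simp

theorem log_int {y : ℝ} (hy : 0 < y) :
    IntegrableOn (fun z : ℝ => y / (1 + y * z) - 1 / (1 + z)) (Ioi 0) ∧
    ∫ z in Ioi (0:ℝ), (y / (1 + y * z) - 1 / (1 + z)) = Real.log y := by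
  have hi : IntegrableOn (fun z : ℝ => y / (1 + y * z) - 1 / (1 + z)) (Ioi 0) := by
    refine intOn_of_bound measurableSet_Ioi (by fun_prop)
      (inv_sq_int.const_mul (|y - 1| * (min 1 y)⁻¹)) ?_
    intro z hz
    have hz' : (0:ℝ) < z := hz
    have hm : 0 < min 1 y := lt_min one_pos hy
    have e : y / (1 + y * z) - 1 / (1 + z) = (y - 1) / ((1 + y * z) * (1 + z)) := by
      field_simp; ring
    rw [e, abs_div, abs_of_pos (by positivity : 0 < (1 + y * z) * (1 + z)), div_eq_mul_inv, mul_assoc]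
    apply mul_le_mul_of_nonneg_left _ (abs_nonneg _)
    rw [one_div, ← mul_inv]
    apply inv_anti₀ (by positivity)
    have : min 1 y * (1 + z) ≤ 1 + y * z := by
      nlinarith [min_le_left 1 y, min_le_right 1 y]
    nlinarith
  refine ⟨hi, ?_⟩
  have hc : ContinuousWithinAt (fun z : ℝ => Real.log ((1 + y * z) / (1 + z))) (Ici 0) 0 := by
    apply ContinuousAt.continuousWithinAt
    apply ContinuousAt.log
    · apply ContinuousAt.div (by fun_prop) (by fun_prop) (by norm_num)
    · norm_num
  have hd : ∀ z ∈ Ioi (0:ℝ), HasDerivAt (fun z : ℝ => Real.log ((1 + y * z) / (1 + z)))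
      (y / (1 + y * z) - 1 / (1 + z)) z := by
    intro z hz
    have hz' : (0:ℝ) < z := hz
    have d1 : HasDerivAt (fun z : ℝ => 1 + y * z) y z := by
      simpa using ((hasDerivAt_id z).const_mul y).const_add 1
    have d2 : HasDerivAt (fun z : ℝ => 1 + z) 1 z := by
      simpa using (hasDerivAt_id z).const_add 1
    have d3 := (d1.div d2 (by positivity)).log (by simp only [Pi.div_apply]; positivity)
    refine d3.congr_deriv ?_
    simp only [Pi.div_apply]
    field_simp
  have ht : Tendsto (fun z : ℝ => Real.log ((1 + y * z) / (1 + z))) atTop (𝓝 (Real.log y)) := by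
    apply Tendsto.log _ hy.ne'
    have : Tendsto (fun z : ℝ => y + (1 - y) * (1 + z)⁻¹) atTop (𝓝 (y + (1 - y) * 0)) := by
      apply Tendsto.const_add
      apply Tendsto.const_mul
      exact tendsto_inv_atTop_zero.comp (tendsto_atTop_add_const_left _ _ tendsto_id)
    rw [mul_zero, add_zero] at this
    refine this.congr' ?_
    filter_upwards [eventually_gt_atTop 0] with z hz
    field_simp
    ring
  rw [integral_Ioi_of_hasDerivAt_of_tendsto hc hd hi ht]
  simp

theorem J_all {α y : ℝ} (h0 : 0 < α) (h1 : α < 1 / 2) (hy : 0 < y) :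
    IntegrableOn (fun z : ℝ => (z ^ (-α) - 1) / (z - 1) * ((1 + y) / (1 + y * z))) (Ioi 0) ∧
    ∫ z in Ioi (0:ℝ), (z ^ (-α) - 1) / (z - 1) * ((1 + y) / (1 + y * z)) =
      Real.pi * Real.cot (Real.pi * α) + Real.log y -
        y ^ α * (Real.pi / Real.sin (Real.pi * α)) := by
  obtain ⟨a1, b1⟩ := G_all h0 h1
  obtain ⟨a2, b2⟩ := log_int hy
  obtain ⟨a3, b3⟩ := Msc h0 (by linarith : α < 1) hy
  have e : EqOn (fun z : ℝ => (z ^ (-α) - 1) / (z - 1) * ((1 + y) / (1 + y * z)))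
      (fun z => (((z ^ (-α) - 1) / (z - 1) + 1 / (1 + z)) + (y / (1 + y * z) - 1 / (1 + z))) -
        y * (z ^ (-α) / (1 + y * z))) (Ioi 0) := by
    intro z hz
    have hz' : (0:ℝ) < z := hz
    simp only
    by_cases h : z = 1
    · subst h
      simp
      ring
    · have : z - 1 ≠ 0 := sub_ne_zero.2 h
      field_simp
      ring
  have q1 := integral_add (μ := volume.restrict (Ioi (0:ℝ))) a1 a2
  have q2 := integral_sub (μ := volume.restrict (Ioi (0:ℝ))) (a1.add a2) (a3.const_mul y)
  simp only [Pi.add_apply] at q1 q2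
  constructor
  · rw [integrableOn_congr_fun e measurableSet_Ioi]
    exact (a1.add a2).sub (a3.const_mul y)
  · rw [setIntegral_congr_fun measurableSet_Ioi e, q2, q1, b1, b2, MeasureTheory.integral_const_mul, b3,
      Real.rpow_sub hy, Real.rpow_one]
    field_simp

theorem W_rho {A B x : ℝ} (hAB : A < B) (hx : 0 < x) :
    (B - (A + B * x) / (1 + x)) / ((A + B * x) / (1 + x) - A) = x⁻¹ := by
  have h : 0 < B - A := by linarith
  have e1 : B - (A + B * x) / (1 + x) = (B - A) / (1 + x) := by field_simp; ring
  have e2 : (A + B * x) / (1 + x) - A = (B - A) * x / (1 + x) := by field_simp; ring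
  rw [e1, e2]
  field_simp

theorem rho_sub {A B x y : ℝ} (hx : 0 < x) (hy : 0 < y) :
    (A + B * x) / (1 + x) - (A + B * y) / (1 + y) =
      (B - A) * (x - y) / ((1 + x) * (1 + y)) := by
  field_simp; ring

theorem P_all {A B α t : ℝ} (ht : t ∈ Ioo A B) (h0 : 0 < α) (h1 : α < 1 / 2) :
    IntegrableOn (fun r => (((B - r) / (r - A)) ^ α - ((B - t) / (t - A)) ^ α) * 1 / (r - t))
      (Ioo A B) ∧
    ∫ r in Ioo A B, (((B - r) / (r - A)) ^ α - ((B - t) / (t - A)) ^ α) * 1 / (r - t) =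
     ((B - t) / (t - A)) ^ α * (Real.pi * Real.cot (Real.pi * α) -
       Real.log ((B - t) / (t - A))) - Real.pi / Real.sin (Real.pi * α) := by
  have hAB : A < B := ht.1.trans ht.2
  have hBA : 0 < B - A := by linarith
  obtain ⟨y, hy, rfl⟩ : ∃ y, 0 < y ∧ (A + B * y) / (1 + y) = t := by
    rw [← rho_image hAB] at ht
    exact ht
  obtain ⟨a, b⟩ := J_all h0 h1 hy
  have hyp : 0 < y ^ α := Real.rpow_pos_of_pos hy _
  rw [W_rho hAB hy]
  set g : ℝ → ℝ := fun x => (1 + y) * ((x⁻¹) ^ α - (y⁻¹) ^ α) / ((1 + x) * (x - y)) with hg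
  have e : EqOn (fun x => (B - A) / (1 + x) ^ 2 *
      ((((B - (A + B * x) / (1 + x)) / ((A + B * x) / (1 + x) - A)) ^ α - (y⁻¹) ^ α) * 1 /
        ((A + B * x) / (1 + x) - (A + B * y) / (1 + y)))) g (Ioi 0) := by
    intro x hx
    have hx' : (0:ℝ) < x := hx
    simp only [hg]
    rw [W_rho hAB hx, rho_sub hx' hy]
    by_cases h : x = y
    · subst h; simp
    · have : x - y ≠ 0 := sub_ne_zero.2 h
      field_simp
  have e2 : EqOn (fun z => g (y * z)) (fun z => (y * y ^ α)⁻¹ *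
      ((z ^ (-α) - 1) / (z - 1) * ((1 + y) / (1 + y * z)))) (Ioi 0) := by
    intro z hz
    have hz' : (0:ℝ) < z := hz
    simp only [hg]
    rw [mul_inv, Real.mul_rpow (by positivity) (by positivity), Real.inv_rpow hy.le,
      Real.inv_rpow hz'.le, Real.rpow_neg hz'.le]
    by_cases h : z = 1
    · subst h; simp
    · have : z - 1 ≠ 0 := sub_ne_zero.2 h
      rw [show y * z - y = y * (z - 1) by ring]
      have : 0 < z ^ α := Real.rpow_pos_of_pos hz' _
      field_simp
  have g1 : IntegrableOn (fun z => g (y * z)) (Ioi 0) := by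
    rw [integrableOn_congr_fun e2 measurableSet_Ioi]
    exact a.const_mul _
  have g2 : IntegrableOn g (Ioi 0) := by
    have := (integrableOn_Ioi_comp_mul_left_iff g 0 hy).1 g1
    rwa [mul_zero] at this
  have v1 := integral_comp_mul_left_Ioi g 0 hy
  rw [mul_zero, setIntegral_congr_fun measurableSet_Ioi e2, MeasureTheory.integral_const_mul, b,
    smul_eq_mul] at v1
  constructor
  · rw [cov_integrable hAB, integrableOn_congr_fun e measurableSet_Ioi]
    exact g2
  · rw [cov_integral hAB, setIntegral_congr_fun measurableSet_Ioi e]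
    have : ∫ x in Ioi (0:ℝ), g x = y * (y⁻¹ * ∫ x in Ioi (0:ℝ), g x) := by field_simp
    rw [this, ← v1, Real.inv_rpow hy.le, Real.log_inv]
    field_simp
    ring

theorem ii_iff {A B : ℝ} (hAB : A < B) (f : ℝ → ℝ) :
    IntervalIntegrable f volume A B ↔ IntegrableOn f (Ioo A B) :=
  intervalIntegrable_iff_integrableOn_Ioo_of_le hAB.le

theorem ii_int {A B : ℝ} (hAB : A < B) (f : ℝ → ℝ) :
    ∫ r in A..B, f r = ∫ r in Ioo A B, f r := by
  rw [intervalIntegral.integral_of_le hAB.le, integral_Ioc_eq_integral_Ioo]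

theorem pv_W {A B α t : ℝ} (ht : t ∈ Ioo A B) (h0 : 0 < α) (h1 : α < 1 / 2) :
    Tendsto (pvApprox A B (fun r => ((B - r) / (r - A)) ^ α) t) (𝓝[>] 0)
      (𝓝 (((B - t) / (t - A)) ^ α * (Real.pi * Real.cot (Real.pi * α)) -
        Real.pi / Real.sin (Real.pi * α))) := by
  have hAB : A < B := ht.1.trans ht.2
  obtain ⟨a, b⟩ := P_all ht h0 h1
  have := pv_mul ht (u := fun _ => 1) (v := fun r => ((B - r) / (r - A)) ^ α)
    (by simp) (pv_one ht) ((ii_iff hAB _).2 a)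
  rw [ii_int hAB, b] at this
  simp only [mul_one] at this
  convert this using 2
  ring

theorem pv_Winv {A B α t : ℝ} (ht : t ∈ Ioo A B) (h0 : 0 < α) (h1 : α < 1 / 2) :
    Tendsto (pvApprox A B (fun r => ((r - A) / (B - r)) ^ α) t) (𝓝[>] 0)
      (𝓝 (Real.pi / Real.sin (Real.pi * α) -
        ((t - A) / (B - t)) ^ α * (Real.pi * Real.cot (Real.pi * α)))) := by
  have := (pv_W (A := A) (B := B) (t := A + B - t) ⟨by linarith [ht.2], by linarith [ht.1]⟩
    h0 h1).neg
  have e : pvApprox A B (fun r => ((r - A) / (B - r)) ^ α) t =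
      fun ε => - pvApprox A B (fun r => ((B - r) / (r - A)) ^ α) (A + B - t) ε := by
    ext ε
    rw [← pv_reflect]
    congr 1
    ext r
    congr 2 <;> ring
  rw [e]
  convert this using 2
  rw [show B - (A + B - t) = t - A by ring, show A + B - t - A = B - t by ring]
  ring

theorem ae_ne_one (c : ℝ) : ∀ᵐ y ∂(volume.restrict (Ioi (0:ℝ))), y ≠ c := by
  apply ae_restrict_of_ae
  exact Measure.ae_ne volume c

theorem N_all {α y : ℝ} (h0 : 0 < α) (h1 : α < 1) (hy : 0 < y) (hy1 : y ≠ 1) :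
    IntegrableOn (fun z : ℝ => z ^ (-α) / ((z + y) * (1 + y * z))) (Ioi 0) ∧
    ∫ z in Ioi (0:ℝ), z ^ (-α) / ((z + y) * (1 + y * z)) =
      (y ^ (-α) - y ^ α) * (Real.pi / Real.sin (Real.pi * α)) / (1 - y ^ 2) := by
  obtain ⟨a1, b1⟩ := Msc h0 h1 hy
  obtain ⟨a2, b2⟩ := Msc' h0 h1 hy
  have hne : 1 - y ^ 2 ≠ 0 := by
    intro h
    have : (1 - y) * (1 + y) = 0 := by linarith
    rcases mul_eq_zero.1 this with h | h
    · exact hy1 (by linarith)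
    · linarith
  have e : EqOn (fun z : ℝ => z ^ (-α) / ((z + y) * (1 + y * z)))
      (fun z => (1 - y ^ 2)⁻¹ * (z ^ (-α) / (z + y) - y * (z ^ (-α) / (1 + y * z)))) (Ioi 0) := by
    intro z hz
    have hz' : (0:ℝ) < z := hz
    simp only
    field_simp
    ring
  constructor
  · rw [integrableOn_congr_fun e measurableSet_Ioi]
    exact (a2.sub (a1.const_mul y)).const_mul _
  · rw [setIntegral_congr_fun measurableSet_Ioi e, MeasureTheory.integral_const_mul,
      MeasureTheory.integral_sub a2 (a1.const_mul y), MeasureTheory.integral_const_mul, b1, b2,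
      Real.rpow_sub hy, Real.rpow_one]
    field_simp

theorem step4 {H : ℝ → ℝ} (hH : Measurable H) (h1 : IntegrableOn (fun x => H x / (1 + x) ^ 2) (Ioi 0))
    {z : ℝ} (hz : 0 < z) :
    ∫ y in Ioi (0:ℝ), (H (z * y) - H y) / ((1 + z * y) * (1 + y)) =
      ∫ y in Ioi (0:ℝ), H y * (1 - z) * (1 - y) / ((1 + y) * (z + y) * (1 + z * y)) := by
  set q : ℝ → ℝ := fun x => H x / ((1 + x) * (z + x)) with hq
  have hm : 0 < min 1 z := lt_min one_pos hz
  have bd : ∀ {x w : ℝ}, 0 < x → min 1 z * (1 + x) ≤ w →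
      |H x / ((1 + x) * w)| ≤ (min 1 z)⁻¹ * |H x / (1 + x) ^ 2| := by
    intro x w hx hw
    have hw0 : 0 < w := lt_of_lt_of_le (by positivity) hw
    rw [abs_div, abs_div, abs_of_pos (by positivity : 0 < (1 + x) * w),
      abs_of_pos (by positivity : 0 < (1 + x) ^ 2), inv_mul_eq_div, div_div]
    apply div_le_div_of_nonneg_left (abs_nonneg _) (by positivity)
    nlinarith
  have iq : IntegrableOn q (Ioi 0) := by
    refine intOn_of_bound measurableSet_Ioi (by fun_prop) (h1.abs.const_mul (min 1 z)⁻¹) ?_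
    intro x hx
    have hx' : (0:ℝ) < x := hx
    exact bd hx' (by nlinarith [min_le_left 1 z, min_le_right 1 z])
  have i2 : IntegrableOn (fun y => H y / ((1 + y) * (1 + z * y))) (Ioi 0) := by
    refine intOn_of_bound measurableSet_Ioi (by fun_prop) (h1.abs.const_mul (min 1 z)⁻¹) ?_
    intro x hx
    have hx' : (0:ℝ) < x := hx
    exact bd hx' (by nlinarith [min_le_left 1 z, min_le_right 1 z])
  have iq' : IntegrableOn (fun y => q (z * y)) (Ioi 0) :=
    (integrableOn_Ioi_comp_mul_left_iff q 0 hz).2 (by rwa [mul_zero])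
  have vq := integral_comp_mul_left_Ioi q 0 hz
  rw [mul_zero, smul_eq_mul] at vq
  have e1 : EqOn (fun y => (H (z * y) - H y) / ((1 + z * y) * (1 + y)))
      (fun y => z * q (z * y) - H y / ((1 + y) * (1 + z * y))) (Ioi 0) := by
    intro y hy
    have hy' : (0:ℝ) < y := hy
    simp only [hq]
    rw [show z + z * y = z * (1 + y) by ring]
    field_simp
  have e2 : EqOn (fun y => H y * (1 - z) * (1 - y) / ((1 + y) * (z + y) * (1 + z * y)))
      (fun y => q y - H y / ((1 + y) * (1 + z * y))) (Ioi 0) := by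
    intro y hy
    have hy' : (0:ℝ) < y := hy
    simp only [hq]
    field_simp
    ring
  rw [setIntegral_congr_fun measurableSet_Ioi e1, setIntegral_congr_fun measurableSet_Ioi e2,
    MeasureTheory.integral_sub (iq'.const_mul z) i2, MeasureTheory.integral_sub iq i2,
    MeasureTheory.integral_const_mul, vq]
  field_simp

theorem half_line {α : ℝ} (h0 : 0 < α) (h1 : α < 1) {H : ℝ → ℝ} (hH : Measurable H)
    (hk : Integrable (fun p : ℝ × ℝ => (p.2 / p.1) ^ α * ((H p.1 - H p.2) /
      ((1 + p.1) * (1 + p.2) * (p.1 - p.2))))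
      ((volume.restrict (Ioi (0:ℝ))).prod (volume.restrict (Ioi (0:ℝ)))))
    (i1 : IntegrableOn (fun x => H x / (1 + x) ^ 2) (Ioi 0))
    (i2 : IntegrableOn (fun x => H x * (x ^ α - x ^ (-α)) / (1 + x) ^ 2) (Ioi 0)) :
    ∫ y in Ioi (0:ℝ), ∫ x in Ioi (0:ℝ), (y / x) ^ α * ((H x - H y) /
      ((1 + x) * (1 + y) * (x - y))) =
    (Real.pi / Real.sin (Real.pi * α)) *
      ∫ x in Ioi (0:ℝ), H x * (x ^ α - x ^ (-α)) / (1 + x) ^ 2 := by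
  set μ := volume.restrict (Ioi (0:ℝ)) with hμ
  set k : ℝ → ℝ → ℝ := fun x y => (y / x) ^ α * ((H x - H y) /
      ((1 + x) * (1 + y) * (x - y))) with hkd
  have posae : ∀ᵐ y ∂μ, (0:ℝ) < y := ae_restrict_mem measurableSet_Ioi
  -- scaled kernel
  have sc : ∀ (f : ℝ → ℝ) {y : ℝ}, 0 < y → ∫ x, f x ∂μ = ∫ z, y * f (y * z) ∂μ := by
    intro f y hy
    have := integral_comp_mul_left_Ioi f 0 hy
    rw [mul_zero, smul_eq_mul] at this
    rw [MeasureTheory.integral_const_mul, this]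
    field_simp
    rfl
  have s2 : Integrable (Function.uncurry fun z y => y * k (y * z) y) (μ.prod μ) := by
    have hk' := hk
    rw [integrable_prod_iff' hk.aestronglyMeasurable] at hk'
    have meas : Measurable (Function.uncurry fun z y => y * k (y * z) y) := by
      simp only [hkd, Function.uncurry_def]
      fun_prop
    rw [integrable_prod_iff' meas.aestronglyMeasurable]
    constructor
    · filter_upwards [hk'.1, posae] with y hy hy0
      simp only [Function.uncurry]
      apply Integrable.const_mul
      exact (integrableOn_Ioi_comp_mul_left_iff (fun x => k x y) 0 hy0).2 (by
        rw [mul_zero]; exact hy)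
    · refine hk'.2.congr ?_
      filter_upwards [posae] with y hy0
      rw [sc (fun x => ‖k x y‖) hy0]
      apply MeasureTheory.integral_congr_ae
      filter_upwards with z
      simp only [Function.uncurry, norm_mul, Real.norm_eq_abs, abs_of_pos hy0]
  have st1 : ∫ y, ∫ x, k x y ∂μ ∂μ = ∫ y, ∫ z, y * k (y * z) y ∂μ ∂μ := by
    apply MeasureTheory.integral_congr_ae
    filter_upwards [posae] with y hy0
    exact sc (fun x => k x y) hy0
  rw [st1, ← integral_integral_swap s2]
  set L : ℝ → ℝ → ℝ := fun z y => z ^ (-α) * (H y * (y - 1) / ((1 + y) * (z + y) * (1 + y * z)))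
    with hL
  have st4 : ∫ z, ∫ y, y * k (y * z) y ∂μ ∂μ = ∫ z, ∫ y, L z y ∂μ ∂μ := by
    apply MeasureTheory.integral_congr_ae
    filter_upwards [posae, ae_ne_one 1] with z hz hz1
    have hz2 : z - 1 ≠ 0 := sub_ne_zero.2 hz1
    have a : ∫ y, y * k (y * z) y ∂μ = ∫ y, (z ^ (-α) / (z - 1)) *
        ((H (z * y) - H y) / ((1 + z * y) * (1 + y))) ∂μ := by
      apply MeasureTheory.integral_congr_ae
      filter_upwards [posae] with y hy
      simp only [hkd]
      rw [show y / (y * z) = z⁻¹ by field_simp, Real.inv_rpow hz.le, ← Real.rpow_neg hz.le,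
        show y * z - y = y * (z - 1) by ring, mul_comm y z]
      field_simp
    have b : ∫ y, L z y ∂μ = ∫ y, (z ^ (-α) / (z - 1)) *
        (H y * (1 - z) * (1 - y) / ((1 + y) * (z + y) * (1 + z * y))) ∂μ := by
      apply MeasureTheory.integral_congr_ae
      filter_upwards [posae] with y hy
      simp only [hL]
      rw [mul_comm y z]
      field_simp
      ring
    rw [a, b, MeasureTheory.integral_const_mul, MeasureTheory.integral_const_mul, step4 hH i1 hz]
  rw [st4]
  have Lsec : ∀ y, 0 < y → y ≠ 1 → Integrable (fun z => L z y) μ ∧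
      ∫ z, L z y ∂μ = (Real.pi / Real.sin (Real.pi * α)) *
        (H y * (y ^ α - y ^ (-α)) / (1 + y) ^ 2) := by
    intro y hy hy1
    obtain ⟨a, b⟩ := N_all h0 h1 hy hy1
    have e : (fun z => L z y) =
        fun z => (H y * (y - 1) / (1 + y)) * (z ^ (-α) / ((z + y) * (1 + y * z))) := by
      ext z
      simp only [hL]
      rw [mul_assoc (1 + y)]
      simp only [div_eq_mul_inv, mul_inv]
      ring
    rw [e]
    refine ⟨a.const_mul _, ?_⟩
    rw [MeasureTheory.integral_const_mul, b, show (1 - y ^ 2) = -((y - 1) * (1 + y)) by ring]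
    have : y - 1 ≠ 0 := sub_ne_zero.2 hy1
    field_simp
    ring
  have iL : Integrable (Function.uncurry L) (μ.prod μ) := by
    have meas : Measurable (Function.uncurry L) := by
      simp only [hL, Function.uncurry_def]
      fun_prop
    rw [integrable_prod_iff' meas.aestronglyMeasurable]
    constructor
    · filter_upwards [posae, ae_ne_one 1] with y hy hy1
      exact (Lsec y hy hy1).1
    · refine (i2.const_mul (Real.pi / Real.sin (Real.pi * α))).norm.congr ?_
      filter_upwards [posae, ae_ne_one 1] with y hy hy1
      rw [← (Lsec y hy hy1).2]
      -- constant sign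
      have sg : ∀ᵐ z ∂μ, L z y = (H y * (y - 1)) * (z ^ (-α) / ((1 + y) * (z + y) * (1 + y * z))) ∧
          0 ≤ z ^ (-α) / ((1 + y) * (z + y) * (1 + y * z)) := by
        filter_upwards [posae] with z hz
        constructor
        · simp only [hL]; ring
        · positivity
      have r1 : ∫ z, L z y ∂μ =
          (H y * (y - 1)) * ∫ z, z ^ (-α) / ((1 + y) * (z + y) * (1 + y * z)) ∂μ := by
        rw [← MeasureTheory.integral_const_mul]
        apply MeasureTheory.integral_congr_ae
        filter_upwards [sg] with z hz using hz.1
      have r2 : ∫ z, ‖Function.uncurry L (z, y)‖ ∂μ =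
          |H y * (y - 1)| * ∫ z, z ^ (-α) / ((1 + y) * (z + y) * (1 + y * z)) ∂μ := by
        rw [← MeasureTheory.integral_const_mul]
        apply MeasureTheory.integral_congr_ae
        filter_upwards [sg] with z hz
        simp only [Function.uncurry]
        rw [hz.1, Real.norm_eq_abs, abs_mul, abs_of_nonneg hz.2]
      rw [r1, r2, Real.norm_eq_abs, abs_mul, abs_of_nonneg (a := ∫ z, _ ∂μ)]
      apply MeasureTheory.integral_nonneg_of_ae
      filter_upwards [sg] with z hz using hz.2
  rw [integral_integral_swap iL, ← MeasureTheory.integral_const_mul]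
  apply MeasureTheory.integral_congr_ae
  filter_upwards [posae, ae_ne_one 1] with y hy hy1
  exact (Lsec y hy hy1).2

/-- The model singularity `|x|^(-p)`. -/
noncomputable def Ep (p x : ℝ) : ℝ := |x| ^ (-p)

theorem Ep_nonneg (p x : ℝ) : 0 ≤ Ep p x := Real.rpow_nonneg (abs_nonneg x) _

theorem Ep_meas (p : ℝ) : Measurable (Ep p) := by
  unfold Ep
  fun_prop

theorem Ep_symm (p x y : ℝ) : Ep p (x - y) = Ep p (y - x) := by
  unfold Ep
  rw [abs_sub_comm]

theorem Ep_int0 {p : ℝ} (hp : p < 1) (R : ℝ) (hR : 0 < R) :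
    IntervalIntegrable (Ep p) volume (-R) R := by
  have h1 : IntervalIntegrable (Ep p) volume 0 R := by
    have := intervalIntegral.intervalIntegrable_rpow' (a := 0) (b := R) (r := -p) (by linarith)
    refine this.congr ?_
    intro x hx
    rw [uIoc_of_le hR.le] at hx
    simp only [Ep]
    rw [abs_of_pos hx.1]
  have h2 : IntervalIntegrable (Ep p) volume (-R) 0 := by
    have := (IntervalIntegrable.iff_comp_neg (f := Ep p) (a := 0) (b := R)).1 h1
    have e : (fun x => Ep p (-x)) = Ep p := by
      funext x
      simp [Ep]
    rw [e, neg_zero] at this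
    exact this.symm
  exact h2.trans h1

theorem Ep_int {p : ℝ} (hp : p < 1) (a b c : ℝ) :
    IntegrableOn (fun x => Ep p (x - c)) (Ioo a b) := by
  set R := |a - c| + |b - c| + 1 with hRdef
  have hR : 0 < R := by positivity
  have h1 := (Ep_int0 hp R hR).comp_sub_right c
  rw [intervalIntegrable_iff_integrableOn_Ioo_of_le (by linarith)] at h1
  refine h1.mono_set ?_
  intro x hx
  have := le_abs_self (b - c)
  have := neg_abs_le (a - c)
  have := abs_nonneg (b - c)
  have := abs_nonneg (a - c)
  constructor
  · linarith [hx.1]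
  · linarith [hx.2]

theorem Ep_int' {p : ℝ} (hp : p < 1) (a b c : ℝ) :
    IntegrableOn (fun x => Ep p (c - x)) (Ioo a b) := by
  simp_rw [Ep_symm p c]
  exact Ep_int hp a b c

theorem rp_le {p x d : ℝ} (hp : 0 ≤ p) (hd : 0 < d) (h : d ≤ x) : x ^ (-p) ≤ d ^ (-p) :=
  Real.rpow_le_rpow_of_nonpos hd h (by linarith)

theorem chain2 {p x y d : ℝ} (hp : 0 ≤ p) (hd : 0 < d) (h : d ≤ |x| + |y|) :
    Ep p x * Ep p y ≤ (d / 3) ^ (-p) * (Ep p x + Ep p y) := by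
  have hx := Ep_nonneg p x
  have hy := Ep_nonneg p y
  have hc : 0 ≤ (d / 3) ^ (-p) := by positivity
  rcases le_total (d / 3) |x| with h1 | h1
  · have := rp_le hp (by positivity) h1
    change Ep p x ≤ _ at this
    nlinarith
  · have := rp_le (x := |y|) hp (by positivity : 0 < d / 3) (by linarith)
    change Ep p y ≤ _ at this
    nlinarith

theorem chain3 {p x y z d : ℝ} (hp : 0 ≤ p) (hd : 0 < d) (h : d ≤ |x| + |y| + |z|) :
    Ep p x * Ep p y * Ep p z ≤
      (d / 3) ^ (-p) * (Ep p x * Ep p y + Ep p y * Ep p z + Ep p x * Ep p z) := by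
  have hx := Ep_nonneg p x
  have hy := Ep_nonneg p y
  have hz := Ep_nonneg p z
  have hc : 0 ≤ (d / 3) ^ (-p) := by positivity
  have a1 := mul_nonneg hx hy
  have a2 := mul_nonneg hy hz
  have a3 := mul_nonneg hx hz
  have b1 := mul_nonneg hc a1
  have b2 := mul_nonneg hc a2
  have b3 := mul_nonneg hc a3
  rcases le_total (d / 3) |x| with h1 | h1
  · have := rp_le hp (by positivity) h1
    change Ep p x ≤ _ at this
    have := mul_le_mul_of_nonneg_right this a2
    nlinarith
  rcases le_total (d / 3) |y| with h2 | h2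
  · have := rp_le hp (by positivity) h2
    change Ep p y ≤ _ at this
    have := mul_le_mul_of_nonneg_right this a3
    nlinarith
  · have := rp_le (x := |z|) hp (by positivity : 0 < d / 3) (by linarith)
    change Ep p z ≤ _ at this
    have := mul_le_mul_of_nonneg_right this a1
    nlinarith

/-- `(B-r)/(r-A)` to the power `α` is dominated by the model singularity. -/
theorem W_le {A B α p r : ℝ} (hr : r ∈ Ioo A B) (h0 : 0 ≤ α) (hp : α ≤ p) :
    ((B - r) / (r - A)) ^ α ≤ (B - A) ^ p * Ep p (r - A) := by
  have h1 : 0 < r - A := by linarith [hr.1]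
  have h2 : 0 < B - r := by linarith [hr.2]
  have h3 : 0 < B - A := by linarith
  have e : (B - A) ^ p * Ep p (r - A) = ((B - A) / (r - A)) ^ p := by
    rw [Ep, abs_of_pos h1, Real.div_rpow h3.le h1.le, Real.rpow_neg h1.le, div_eq_mul_inv]
  rw [e]
  calc ((B - r) / (r - A)) ^ α ≤ ((B - A) / (r - A)) ^ α := by
        apply Real.rpow_le_rpow (by positivity) _ h0
        gcongr
        linarith
    _ ≤ _ := by
        apply Real.rpow_le_rpow_of_exponent_le _ hp
        rw [le_div_iff₀ h1]
        linarith

theorem Wi_le {A B α p r : ℝ} (hr : r ∈ Ioo A B) (h0 : 0 ≤ α) (hp : α ≤ p) :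
    ((r - A) / (B - r)) ^ α ≤ (B - A) ^ p * Ep p (B - r) := by
  have h1 : 0 < r - A := by linarith [hr.1]
  have h2 : 0 < B - r := by linarith [hr.2]
  have h3 : 0 < B - A := by linarith
  have e : (B - A) ^ p * Ep p (B - r) = ((B - A) / (B - r)) ^ p := by
    rw [Ep, abs_of_pos h2, Real.div_rpow h3.le h2.le, Real.rpow_neg h2.le, div_eq_mul_inv]
  rw [e]
  calc ((r - A) / (B - r)) ^ α ≤ ((B - A) / (B - r)) ^ α := by
        apply Real.rpow_le_rpow (by positivity) _ h0
        gcongr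
        linarith
    _ ≤ _ := by
        apply Real.rpow_le_rpow_of_exponent_le _ hp
        rw [le_div_iff₀ h2]
        linarith

/-- Hölder difference quotient bound. -/
theorem quot_le {D C γ p : ℝ} {φ : ℝ → ℝ} (hD : 0 < D) (hC : 0 ≤ C) (hγ : 0 < γ)
    (hpe : p = 1 - γ / 2)
    (hφ : ∀ x y, |φ x - φ y| ≤ C * |x - y| ^ γ) {r t : ℝ} (h : r ≠ t) (hle : |r - t| ≤ D) :
    |(φ r - φ t) / (r - t)| ≤ C * D ^ (γ / 2) * Ep p (r - t) := by
  have hx : 0 < |r - t| := abs_pos.2 (sub_ne_zero.2 h)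
  rw [abs_div, div_le_iff₀ hx]
  refine (hφ r t).trans ?_
  have e : Ep p (r - t) * |r - t| = |r - t| ^ (γ / 2) := by
    rw [Ep]
    nth_rewrite 2 [← Real.rpow_one |r - t|]
    rw [← Real.rpow_add hx]
    congr 1
    linarith
  rw [mul_assoc, e, mul_assoc]
  apply mul_le_mul_of_nonneg_left _ hC
  calc |r - t| ^ γ = |r - t| ^ (γ / 2) * |r - t| ^ (γ / 2) := by
        rw [← Real.rpow_add hx]
        congr 1
        ring
    _ ≤ _ := by
        gcongr

theorem hold_aux {γ p d b : ℝ} (hγ : 0 < γ) (hγ1 : γ ≤ 1) (hpe : p = 1 - γ / 2) (hd : 0 < d)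
    (hb : 0 < b) (h : d ≤ 2 * b) : d ^ γ / d / b ≤ 2 * (d ^ (-p) * b ^ (-p)) := by
  have e1 : d ^ γ / d / b = d ^ (-p) * b ^ (-p) * ((d / b) ^ (γ / 2)) := by
    rw [Real.div_rpow hd.le hb.le]
    have a1 : d ^ γ / d = d ^ (-p) * d ^ (γ / 2) := by
      rw [← Real.rpow_add hd]
      nth_rewrite 2 [← Real.rpow_one d]
      rw [← Real.rpow_sub hd]
      congr 1
      linarith
    have a2 : b⁻¹ = b ^ (-p) / b ^ (γ / 2) := by
      rw [← Real.rpow_sub hb, ← Real.rpow_neg_one]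
      congr 1
      linarith
    rw [a1, div_eq_mul_inv, a2]
    ring
  rw [e1]
  have : (d / b) ^ (γ / 2) ≤ 2 := by
    calc (d / b) ^ (γ / 2) ≤ 2 ^ (γ / 2) := by
          apply Real.rpow_le_rpow (by positivity) _ (by positivity)
          rw [div_le_iff₀ hb]
          exact h
      _ ≤ 2 ^ (1:ℝ) := by
          apply Real.rpow_le_rpow_of_exponent_le (by norm_num)
          linarith
      _ = 2 := Real.rpow_one 2
  have hh : 0 ≤ d ^ (-p) * b ^ (-p) := by positivity
  nlinarith

theorem kernel_aux {C γ p s : ℝ} {φ : ℝ → ℝ} (hC : 0 ≤ C) (hγ : 0 < γ) (hγ1 : γ ≤ 1)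
    (hpe : p = 1 - γ / 2)
    (hφ : ∀ x y, |φ x - φ y| ≤ C * |x - y| ^ γ) {r t : ℝ} (h : r ≠ t) (hr : r ≠ s) (ht : t ≠ s)
    (hle : |r - s| ≤ |t - s|) :
    |((φ r - φ s) / (r - s) - (φ t - φ s) / (t - s)) / (r - t)| ≤
      2 * C * (Ep p (r - t) * Ep p (t - s) + Ep p (r - s) * Ep p (t - s)) := by
  have h1 : r - t ≠ 0 := sub_ne_zero.2 h
  have h2 : r - s ≠ 0 := sub_ne_zero.2 hr
  have h3 : t - s ≠ 0 := sub_ne_zero.2 ht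
  have e : ((φ r - φ s) / (r - s) - (φ t - φ s) / (t - s)) / (r - t) =
      (φ r - φ t) / (r - t) / (t - s) - (φ r - φ s) / (r - s) / (t - s) := by
    field_simp
    ring
  rw [e]
  refine (abs_sub _ _).trans ?_
  rw [abs_div, abs_div, abs_div, abs_div]
  have p1 : 0 < |r - t| := abs_pos.2 h1
  have p2 : 0 < |r - s| := abs_pos.2 h2
  have p3 : 0 < |t - s| := abs_pos.2 h3
  have tri : |r - t| ≤ 2 * |t - s| := by
    have : |r - t| ≤ |r - s| + |t - s| := by
      have := abs_sub (r - s) (t - s)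
      simpa using this
    linarith
  have b1 : |φ r - φ t| / |r - t| / |t - s| ≤ C * (2 * (Ep p (r - t) * Ep p (t - s))) := by
    calc _ ≤ C * |r - t| ^ γ / |r - t| / |t - s| := by
          gcongr
          exact hφ r t
      _ = C * (|r - t| ^ γ / |r - t| / |t - s|) := by ring
      _ ≤ _ := by
          apply mul_le_mul_of_nonneg_left _ hC
          exact hold_aux hγ hγ1 hpe p1 p3 tri
  have b2 : |φ r - φ s| / |r - s| / |t - s| ≤ C * (2 * (Ep p (r - s) * Ep p (t - s))) := by
    calc _ ≤ C * |r - s| ^ γ / |r - s| / |t - s| := by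
          gcongr
          exact hφ r s
      _ = C * (|r - s| ^ γ / |r - s| / |t - s|) := by ring
      _ ≤ _ := by
          apply mul_le_mul_of_nonneg_left _ hC
          exact hold_aux hγ hγ1 hpe p2 p3 (by linarith)
  linarith

theorem kernel_bd {C γ p s : ℝ} {φ : ℝ → ℝ} (hC : 0 ≤ C) (hγ : 0 < γ) (hγ1 : γ ≤ 1)
    (hpe : p = 1 - γ / 2)
    (hφ : ∀ x y, |φ x - φ y| ≤ C * |x - y| ^ γ) {r t : ℝ} (h : r ≠ t) (hr : r ≠ s) (ht : t ≠ s) :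
    |((φ r - φ s) / (r - s) - (φ t - φ s) / (t - s)) / (r - t)| ≤
      2 * C * (Ep p (r - t) * Ep p (t - s) + Ep p (r - t) * Ep p (r - s)
        + Ep p (r - s) * Ep p (t - s)) := by
  have n1 := mul_nonneg hC (mul_nonneg (Ep_nonneg p (r - t)) (Ep_nonneg p (t - s)))
  have n2 := mul_nonneg hC (mul_nonneg (Ep_nonneg p (r - t)) (Ep_nonneg p (r - s)))
  rcases le_total |r - s| |t - s| with hle | hle
  · refine (kernel_aux hC hγ hγ1 hpe hφ h hr ht hle).trans ?_
    nlinarith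
  · have := kernel_aux hC hγ hγ1 hpe hφ h.symm ht hr hle
    have e : ((φ t - φ s) / (t - s) - (φ r - φ s) / (r - s)) / (t - r) =
      ((φ r - φ s) / (r - s) - (φ t - φ s) / (t - s)) / (r - t) := by
      rw [← neg_sub ((φ r - φ s) / (r - s)), ← neg_sub r t, neg_div_neg_eq]
    rw [e, Ep_symm p t r] at this
    refine this.trans ?_
    nlinarith

/-- Combined bound. -/
theorem comb {c X Y Z R S : ℝ} (hc : 0 ≤ c) (hX : 0 ≤ X) (hY : 0 ≤ Y) (hZ : 0 ≤ Z) (hR : 0 ≤ R)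
    (hS : 0 ≤ S) (h1 : X * R ≤ c * (X + R)) (h2 : Y * S ≤ c * (Y + S))
    (h3 : X * Z * Y ≤ c * (X * Z + Z * Y + X * Y))
    (h4 : X * Z * S ≤ c * (X * Z + Z * S + X * S))
    (h5 : R * Z * Y ≤ c * (R * Z + Z * Y + R * Y)) :
    X * Y * (Z * S + Z * R + R * S) ≤
      5 * c ^ 2 * ((X + R) * (Y + S) + Z * (X + R) + Z * (Y + S)) := by
  have xy := mul_nonneg hX hY
  have xs := mul_nonneg hX hS
  have ry := mul_nonneg hR hY
  have rs := mul_nonneg hR hS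
  have zx := mul_nonneg hZ hX
  have zr := mul_nonneg hZ hR
  have zy := mul_nonneg hZ hY
  have zs := mul_nonneg hZ hS
  set M := (X + R) * (Y + S) + Z * (X + R) + Z * (Y + S) with hM
  have k3 : X * Z * Y ≤ c * M := h3.trans (mul_le_mul_of_nonneg_left (by rw [hM]; nlinarith) hc)
  have k4 : X * Z * S ≤ c * M := h4.trans (mul_le_mul_of_nonneg_left (by rw [hM]; nlinarith) hc)
  have k5 : R * Z * Y ≤ c * M := h5.trans (mul_le_mul_of_nonneg_left (by rw [hM]; nlinarith) hc)
  have l1 : X * Y * (R * S) ≤ c ^ 2 * M := by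
    calc X * Y * (R * S) = (X * R) * (Y * S) := by ring
      _ ≤ (c * (X + R)) * (c * (Y + S)) := by gcongr
      _ = c ^ 2 * ((X + R) * (Y + S)) := by ring
      _ ≤ _ := mul_le_mul_of_nonneg_left (by rw [hM]; nlinarith) (by positivity)
  have l2 : X * Y * (Z * S) ≤ 2 * c ^ 2 * M := by
    calc X * Y * (Z * S) = (X * Z) * (Y * S) := by ring
      _ ≤ (X * Z) * (c * (Y + S)) := by gcongr
      _ = c * (X * Z * Y + X * Z * S) := by ring
      _ ≤ c * (c * M + c * M) := by gcongr
      _ = _ := by ring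
  have l3 : X * Y * (Z * R) ≤ 2 * c ^ 2 * M := by
    calc X * Y * (Z * R) = (Z * Y) * (X * R) := by ring
      _ ≤ (Z * Y) * (c * (X + R)) := by gcongr
      _ = c * (X * Z * Y + R * Z * Y) := by ring
      _ ≤ c * (c * M + c * M) := by gcongr
      _ = _ := by ring
  nlinarith

theorem ZV_int {A B p : ℝ} (hp : p < 1) {V : ℝ → ℝ} (hV : IntegrableOn V (Ioo A B)) :
    Integrable (fun q : ℝ × ℝ => Ep p (q.1 - q.2) * V q.2)
      ((volume.restrict (Ioo A B)).prod (volume.restrict (Ioo A B))) := by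
  have f1 : Integrable ((Ioo A B).indicator V) volume := hV.integrable_indicator measurableSet_Ioo
  have g1 : Integrable ((Ioo (A - B) (B - A)).indicator (fun x => Ep p (x - 0))) volume :=
    (Ep_int hp (A - B) (B - A) 0).integrable_indicator measurableSet_Ioo
  have h := f1.convolution_integrand (ContinuousLinearMap.mul ℝ ℝ) g1
  rw [Measure.prod_restrict]
  have h2 := h.integrableOn (s := Ioo A B ×ˢ Ioo A B)
  refine IntegrableOn.congr_fun h2 ?_ (measurableSet_Ioo.prod measurableSet_Ioo)
  rintro ⟨r, t⟩ ⟨hr, ht⟩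
  simp only [ContinuousLinearMap.mul_apply'] at hr ht ⊢
  have hrt : r - t ∈ Ioo (A - B) (B - A) := by
    constructor
    · linarith [hr.1, ht.2]
    · linarith [hr.2, ht.1]
  rw [indicator_of_mem ht, indicator_of_mem hrt, sub_zero, mul_comm]

theorem ZU_int {A B p : ℝ} (hp : p < 1) {U : ℝ → ℝ} (hU : IntegrableOn U (Ioo A B)) :
    Integrable (fun q : ℝ × ℝ => Ep p (q.1 - q.2) * U q.1)
      ((volume.restrict (Ioo A B)).prod (volume.restrict (Ioo A B))) := by
  have h := (ZV_int hp hU).swap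
  refine h.congr (ae_of_all _ ?_)
  rintro ⟨r, t⟩
  simp only [Function.comp, Prod.swap]
  rw [Ep_symm]

/-- The singular double kernel. -/
noncomputable def kker (A B α s : ℝ) (φ : ℝ → ℝ) (q : ℝ × ℝ) : ℝ :=
  ((B - q.1) / (q.1 - A)) ^ α * ((q.2 - A) / (B - q.2)) ^ α *
    (((φ q.1 - φ s) / (q.1 - s) - (φ q.2 - φ s) / (q.2 - s)) / (q.1 - q.2))

theorem kker_meas {A B α s : ℝ} {φ : ℝ → ℝ} (hm : Measurable φ) : Measurable (kker A B α s φ) := by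
  unfold kker
  fun_prop

theorem kker_bd {A B α s C γ p : ℝ} {φ : ℝ → ℝ} (hs : s ∈ Ioo A B) (h0 : 0 < α) (h1 : α < 1 / 2)
    (hC : 0 ≤ C) (hγ : 0 < γ) (hγ1 : γ ≤ 1) (hpe : p = 1 - γ / 2)
    (hφ : ∀ x y, |φ x - φ y| ≤ C * |x - y| ^ γ) :
    ∃ K : ℝ, ∀ r ∈ Ioo A B, ∀ t ∈ Ioo A B, r ≠ s → t ≠ s → |kker A B α s φ (r, t)| ≤
      K * ((Ep p (r - A) + Ep p (r - s)) * (Ep p (B - t) + Ep p (t - s))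
        + Ep p (r - t) * (Ep p (r - A) + Ep p (r - s))
        + Ep p (r - t) * (Ep p (B - t) + Ep p (t - s))) := by
  have hp0 : 0 ≤ p := by linarith
  have hpα : α ≤ p := by linarith
  obtain ⟨hs1, hs2⟩ := hs
  set d := min (s - A) (B - s) with hd
  have hd0 : 0 < d := lt_min (by linarith) (by linarith)
  have hdA : d ≤ s - A := min_le_left _ _
  have hdB : d ≤ B - s := min_le_right _ _
  set c := (d / 3) ^ (-p) with hc
  have hc0 : 0 ≤ c := by positivity
  have hD : 0 < B - A := by linarith
  refine ⟨(B - A) ^ p * (B - A) ^ p * (2 * C) * (5 * c ^ 2), ?_⟩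
  intro r hr t ht hrs hts
  have nX := Ep_nonneg p (r - A)
  have nY := Ep_nonneg p (B - t)
  have nZ := Ep_nonneg p (r - t)
  have nR := Ep_nonneg p (r - s)
  have nS := Ep_nonneg p (t - s)
  by_cases hrt : r = t
  · have : kker A B α s φ (r, t) = 0 := by simp [kker, hrt]
    rw [this, abs_zero]
    positivity
  have aA : |r - A| = r - A := abs_of_pos (by linarith [hr.1])
  have aB : |B - t| = B - t := abs_of_pos (by linarith [ht.2])
  have k1 := le_abs_self (r - s)
  have k2 := neg_abs_le (r - s)
  have k3 := le_abs_self (t - s)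
  have k4 := neg_abs_le (t - s)
  have k5 := le_abs_self (r - t)
  have k6 := neg_abs_le (r - t)
  have key := comb hc0 nX nY nZ nR nS
    (chain2 hp0 hd0 (by rw [aA]; linarith))
    (chain2 hp0 hd0 (by rw [aB]; linarith))
    (chain3 hp0 hd0 (by rw [aA, aB]; linarith))
    (chain3 hp0 hd0 (by rw [aA]; linarith))
    (chain3 hp0 hd0 (by rw [aB]; linarith))
  have kb := kernel_bd (s := s) hC hγ hγ1 hpe hφ hrt hrs hts
  have w1 := W_le hr h0.le hpα
  have w2 := Wi_le ht h0.le hpα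
  have q1 : 0 < (B - r) / (r - A) := div_pos (by linarith [hr.2]) (by linarith [hr.1])
  have q2 : 0 < (t - A) / (B - t) := div_pos (by linarith [ht.1]) (by linarith [ht.2])
  simp only [kker]
  rw [abs_mul, abs_mul, abs_of_pos (Real.rpow_pos_of_pos q1 α),
    abs_of_pos (Real.rpow_pos_of_pos q2 α)]
  calc _ ≤ ((B - A) ^ p * Ep p (r - A)) * ((B - A) ^ p * Ep p (B - t)) *
        (2 * C * (Ep p (r - t) * Ep p (t - s) + Ep p (r - t) * Ep p (r - s)
        + Ep p (r - s) * Ep p (t - s))) := by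
        gcongr
    _ = (B - A) ^ p * (B - A) ^ p * (2 * C) * (Ep p (r - A) * Ep p (B - t) *
        (Ep p (r - t) * Ep p (t - s) + Ep p (r - t) * Ep p (r - s)
        + Ep p (r - s) * Ep p (t - s))) := by ring
    _ ≤ (B - A) ^ p * (B - A) ^ p * (2 * C) * _ := by
        apply mul_le_mul_of_nonneg_left key (by positivity)
    _ = _ := by ring

theorem ae_mem_ne (A B c : ℝ) : ∀ᵐ y ∂(volume.restrict (Ioo A B)), y ∈ Ioo A B ∧ y ≠ c := by
  filter_upwards [ae_restrict_mem measurableSet_Ioo, ae_restrict_of_ae (Measure.ae_ne volume c)]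
    with y h1 h2 using ⟨h1, h2⟩

theorem kker_int {A B α s C γ : ℝ} {φ : ℝ → ℝ} (hs : s ∈ Ioo A B) (h0 : 0 < α) (h1 : α < 1 / 2)
    (hC : 0 ≤ C) (hγ : 0 < γ) (hγ1 : γ ≤ 1)
    (hφ : ∀ x y, |φ x - φ y| ≤ C * |x - y| ^ γ) (hm : Measurable φ) :
    Integrable (kker A B α s φ)
      ((volume.restrict (Ioo A B)).prod (volume.restrict (Ioo A B))) := by
  obtain ⟨K, hK⟩ := kker_bd hs h0 h1 hC hγ hγ1 rfl hφ
  set p := 1 - γ / 2 with hp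
  have hp1 : p < 1 := by linarith
  have iU : IntegrableOn (fun r => Ep p (r - A) + Ep p (r - s)) (Ioo A B) :=
    (Ep_int hp1 A B A).add (Ep_int hp1 A B s)
  have iV : IntegrableOn (fun t => Ep p (B - t) + Ep p (t - s)) (Ioo A B) :=
    (Ep_int' hp1 A B B).add (Ep_int hp1 A B s)
  have i1 := iU.integrable.mul_prod iV.integrable
  have i2 := ZU_int hp1 iU
  have i3 := ZV_int hp1 iV
  refine Integrable.mono' (((i1.add i2).add i3).const_mul K) (kker_meas hm).aestronglyMeasurable ?_
  filter_upwards [Measure.quasiMeasurePreserving_fst.ae (ae_mem_ne A B s),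
    Measure.quasiMeasurePreserving_snd.ae (ae_mem_ne A B s)] with q hq1 hq2
  exact hK q.1 hq1.1 q.2 hq2.1 hq1.2 hq2.2

theorem W_meas (A B α : ℝ) : Measurable (fun r : ℝ => ((B - r) / (r - A)) ^ α) := by fun_prop
theorem Wi_meas (A B α : ℝ) : Measurable (fun r : ℝ => ((r - A) / (B - r)) ^ α) := by fun_prop

theorem W_int {A B α : ℝ} (h0 : 0 < α) (h1 : α < 1 / 2) :
    IntegrableOn (fun r : ℝ => ((B - r) / (r - A)) ^ α) (Ioo A B) := by
  refine intOn_of_bound measurableSet_Ioo (W_meas A B α)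
    ((Ep_int (p := α) (by linarith) A B A).const_mul ((B - A) ^ α)) ?_
  intro r hr
  have q1 : 0 < (B - r) / (r - A) := div_pos (by linarith [hr.2]) (by linarith [hr.1])
  rw [abs_of_pos (Real.rpow_pos_of_pos q1 α)]
  exact W_le hr h0.le le_rfl

theorem Wi_int {A B α : ℝ} (h0 : 0 < α) (h1 : α < 1 / 2) :
    IntegrableOn (fun r : ℝ => ((r - A) / (B - r)) ^ α) (Ioo A B) := by
  refine intOn_of_bound measurableSet_Ioo (Wi_meas A B α)
    ((Ep_int' (p := α) (by linarith) A B B).const_mul ((B - A) ^ α)) ?_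
  intro r hr
  have q1 : 0 < (r - A) / (B - r) := div_pos (by linarith [hr.1]) (by linarith [hr.2])
  rw [abs_of_pos (Real.rpow_pos_of_pos q1 α)]
  exact Wi_le hr h0.le le_rfl

theorem q_bd {A B t C γ p : ℝ} {φ : ℝ → ℝ} (ht : t ∈ Ioo A B)
    (hC : 0 ≤ C) (hγ : 0 < γ) (hpe : p = 1 - γ / 2)
    (hφ : ∀ x y, |φ x - φ y| ≤ C * |x - y| ^ γ) {r : ℝ} (hr : r ∈ Ioo A B) :
    |(φ r - φ t) / (r - t)| ≤ C * (B - A) ^ (γ / 2) * Ep p (r - t) := by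
  have hD : 0 < B - A := by linarith [ht.1, ht.2]
  by_cases h : r = t
  · have := Ep_nonneg p (r - t)
    have e : (φ r - φ t) / (r - t) = 0 := by rw [h, sub_self, zero_div]
    rw [e, abs_zero]
    positivity
  · apply quot_le hD hC hγ hpe hφ h
    rw [abs_le]
    constructor <;> linarith [hr.1, hr.2, ht.1, ht.2]

theorem h_int {A B s C γ : ℝ} {φ : ℝ → ℝ} (hs : s ∈ Ioo A B)
    (hC : 0 ≤ C) (hγ : 0 < γ)
    (hφ : ∀ x y, |φ x - φ y| ≤ C * |x - y| ^ γ) (hm : Measurable φ) :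
    IntegrableOn (fun r => (φ r - φ s) / (r - s)) (Ioo A B) := by
  refine intOn_of_bound measurableSet_Ioo (by fun_prop)
    ((Ep_int (p := 1 - γ / 2) (by linarith) A B s).const_mul (C * (B - A) ^ (γ / 2))) ?_
  intro r hr
  exact q_bd hs hC hγ rfl hφ hr

theorem hW_int {A B α s C γ : ℝ} {φ : ℝ → ℝ} (hs : s ∈ Ioo A B) (h0 : 0 < α) (h1 : α < 1 / 2)
    (hC : 0 ≤ C) (hγ : 0 < γ) (hγ1 : γ ≤ 1)
    (hφ : ∀ x y, |φ x - φ y| ≤ C * |x - y| ^ γ) (hm : Measurable φ) :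
    IntegrableOn (fun r => (φ r - φ s) * ((B - r) / (r - A)) ^ α / (r - s)) (Ioo A B) := by
  set p := 1 - γ / 2 with hp
  have hp1 : p < 1 := by linarith
  have hp0 : 0 ≤ p := by linarith
  have hsA : 0 < s - A := by linarith [hs.1]
  have hD : 0 < B - A := by linarith [hs.1, hs.2]
  refine intOn_of_bound measurableSet_Ioo (by fun_prop)
    (((Ep_int hp1 A B A).add (Ep_int hp1 A B s)).const_mul
      ((B - A) ^ p * (C * (B - A) ^ (γ / 2)) * ((s - A) / 3) ^ (-p))) ?_
  intro r hr
  have q1 : 0 < (B - r) / (r - A) := div_pos (by linarith [hr.2]) (by linarith [hr.1])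
  have w := W_le (p := p) hr h0.le (by linarith)
  have b := q_bd hs hC hγ hp hφ hr
  have aA : |r - A| = r - A := abs_of_pos (by linarith [hr.1])
  have k1 := le_abs_self (r - s)
  have k2 := neg_abs_le (r - s)
  have ch := chain2 (p := p) (x := r - A) (y := r - s) hp0 hsA (by rw [aA]; linarith)
  have nX := Ep_nonneg p (r - A)
  have nR := Ep_nonneg p (r - s)
  have e : (φ r - φ s) * ((B - r) / (r - A)) ^ α / (r - s) =
    ((B - r) / (r - A)) ^ α * ((φ r - φ s) / (r - s)) := by ring
  rw [e, abs_mul, abs_of_pos (Real.rpow_pos_of_pos q1 α)]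
  calc _ ≤ ((B - A) ^ p * Ep p (r - A)) * (C * (B - A) ^ (γ / 2) * Ep p (r - s)) := by gcongr
    _ = (B - A) ^ p * (C * (B - A) ^ (γ / 2)) * (Ep p (r - A) * Ep p (r - s)) := by ring
    _ ≤ (B - A) ^ p * (C * (B - A) ^ (γ / 2)) * _ := mul_le_mul_of_nonneg_left ch (by positivity)
    _ = _ := by simp only [Pi.add_apply]; ring

theorem hWi_int {A B α s C γ : ℝ} {φ : ℝ → ℝ} (hs : s ∈ Ioo A B) (h0 : 0 < α) (h1 : α < 1 / 2)
    (hC : 0 ≤ C) (hγ : 0 < γ) (hγ1 : γ ≤ 1)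
    (hφ : ∀ x y, |φ x - φ y| ≤ C * |x - y| ^ γ) (hm : Measurable φ) :
    IntegrableOn (fun r => (φ r - φ s) * ((r - A) / (B - r)) ^ α / (r - s)) (Ioo A B) := by
  set p := 1 - γ / 2 with hp
  have hp1 : p < 1 := by linarith
  have hp0 : 0 ≤ p := by linarith
  have hsA : 0 < B - s := by linarith [hs.2]
  have hD : 0 < B - A := by linarith [hs.1, hs.2]
  refine intOn_of_bound measurableSet_Ioo (by fun_prop)
    (((Ep_int' hp1 A B B).add (Ep_int hp1 A B s)).const_mul
      ((B - A) ^ p * (C * (B - A) ^ (γ / 2)) * ((B - s) / 3) ^ (-p))) ?_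
  intro r hr
  have q1 : 0 < (r - A) / (B - r) := div_pos (by linarith [hr.1]) (by linarith [hr.2])
  have w := Wi_le (p := p) hr h0.le (by linarith)
  have b := q_bd hs hC hγ hp hφ hr
  have aA : |B - r| = B - r := abs_of_pos (by linarith [hr.2])
  have k1 := le_abs_self (r - s)
  have k2 := neg_abs_le (r - s)
  have ch := chain2 (p := p) (x := B - r) (y := r - s) hp0 hsA (by rw [aA]; linarith)
  have nX := Ep_nonneg p (B - r)
  have nR := Ep_nonneg p (r - s)
  have e : (φ r - φ s) * ((r - A) / (B - r)) ^ α / (r - s) =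
    ((r - A) / (B - r)) ^ α * ((φ r - φ s) / (r - s)) := by ring
  rw [e, abs_mul, abs_of_pos (Real.rpow_pos_of_pos q1 α)]
  calc _ ≤ ((B - A) ^ p * Ep p (B - r)) * (C * (B - A) ^ (γ / 2) * Ep p (r - s)) := by gcongr
    _ = (B - A) ^ p * (C * (B - A) ^ (γ / 2)) * (Ep p (B - r) * Ep p (r - s)) := by ring
    _ ≤ (B - A) ^ p * (C * (B - A) ^ (γ / 2)) * _ := mul_le_mul_of_nonneg_left ch (by positivity)
    _ = _ := by simp only [Pi.add_apply]; ring

theorem rho_mp {A B : ℝ} (hAB : A < B) :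
    MeasurePreserving (fun x : ℝ => (A + B * x) / (1 + x))
      ((volume.restrict (Ioi (0:ℝ))).withDensity (fun x => ENNReal.ofReal |(B - A) / (1 + x) ^ 2|))
      (volume.restrict (Ioo A B)) := by
  refine ⟨by fun_prop, ?_⟩
  have h := map_withDensity_abs_det_fderiv_eq_addHaar (volume : Measure ℝ)
    (s := Ioi (0:ℝ)) (f := fun x : ℝ => (A + B * x) / (1 + x))
    (f' := fun x => ContinuousLinearMap.toSpanSingleton ℝ ((B - A) / (1 + x) ^ 2))
    measurableSet_Ioi.nullMeasurableSet
    (fun x hx => (rho_deriv hx).hasFDerivAt.hasFDerivWithinAt) (rho_inj hAB)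
  rw [rho_image hAB] at h
  simpa only [ContinuousLinearMap.det_toSpanSingleton] using h

theorem cov_prod {A B : ℝ} (hAB : A < B) {k : ℝ × ℝ → ℝ}
    (hk : Integrable k ((volume.restrict (Ioo A B)).prod (volume.restrict (Ioo A B)))) :
    Integrable (fun q : ℝ × ℝ => ((B - A) / (1 + q.1) ^ 2) * ((B - A) / (1 + q.2) ^ 2) *
      k ((A + B * q.1) / (1 + q.1), (A + B * q.2) / (1 + q.2)))
      ((volume.restrict (Ioi (0:ℝ))).prod (volume.restrict (Ioi (0:ℝ)))) := by
  have hm := (rho_mp hAB).prod (rho_mp hAB)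
  have h := hm.integrable_comp_of_integrable hk
  rw [prod_withDensity (by fun_prop) (by fun_prop),
    integrable_withDensity_iff_integrable_smul' (by fun_prop)
      (ae_of_all _ fun x => ENNReal.mul_lt_top ENNReal.ofReal_lt_top ENNReal.ofReal_lt_top)] at h
  refine h.congr (ae_of_all _ ?_)
  intro q
  have hD : 0 < B - A := by linarith
  have e1 : |(B - A) / (1 + q.1) ^ 2| = (B - A) / (1 + q.1) ^ 2 := abs_of_nonneg (by positivity)
  have e2 : |(B - A) / (1 + q.2) ^ 2| = (B - A) / (1 + q.2) ^ 2 := abs_of_nonneg (by positivity)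
  simp only [e1, e2, ENNReal.toReal_mul, smul_eq_mul, Function.comp, Prod.map]
  rw [ENNReal.toReal_ofReal (by positivity), ENNReal.toReal_ofReal (by positivity)]

theorem W_rho' {A B x : ℝ} (hAB : A < B) (hx : 0 < x) :
    ((A + B * x) / (1 + x) - A) / (B - (A + B * x) / (1 + x)) = x := by
  have := W_rho hAB hx
  rw [← inv_div, this, inv_inv]

theorem kker_rho {A B α s : ℝ} {φ : ℝ → ℝ} (hAB : A < B) {x y : ℝ} (hx : 0 < x) (hy : 0 < y)
    {H : ℝ → ℝ} (hH : ∀ x, H x = (φ ((A + B * x) / (1 + x)) - φ s) / ((A + B * x) / (1 + x) - s)) :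
    ((B - A) / (1 + x) ^ 2) * ((B - A) / (1 + y) ^ 2) *
      kker A B α s φ ((A + B * x) / (1 + x), (A + B * y) / (1 + y)) =
    (B - A) * ((y / x) ^ α * ((H x - H y) / ((1 + x) * (1 + y) * (x - y)))) := by
  simp only [kker]
  rw [← hH x, ← hH y, W_rho hAB hx, W_rho' hAB hy, rho_sub hx hy, Real.div_rpow hy.le hx.le,
    Real.inv_rpow hx.le]
  have hD : B - A ≠ 0 := by linarith
  by_cases hxy : x = y
  · simp [hxy]
  have : x - y ≠ 0 := sub_ne_zero.2 hxy
  have h1 : x ^ α ≠ 0 := (Real.rpow_pos_of_pos hx α).ne'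
  field_simp

/-- The commutation identity on `(A,B)`. -/
theorem kker_integral {A B α s C γ : ℝ} {φ : ℝ → ℝ} (hs : s ∈ Ioo A B) (h0 : 0 < α)
    (h1 : α < 1 / 2) (hC : 0 ≤ C) (hγ : 0 < γ) (hγ1 : γ ≤ 1)
    (hφ : ∀ x y, |φ x - φ y| ≤ C * |x - y| ^ γ) (hm : Measurable φ) :
    ∫ t in Ioo A B, ∫ r in Ioo A B, kker A B α s φ (r, t) =
      (Real.pi / Real.sin (Real.pi * α)) *
      ((∫ r in Ioo A B, (φ r - φ s) * ((r - A) / (B - r)) ^ α / (r - s)) -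
       ∫ r in Ioo A B, (φ r - φ s) * ((B - r) / (r - A)) ^ α / (r - s)) := by
  have hAB : A < B := hs.1.trans hs.2
  have hD : B - A ≠ 0 := by linarith
  set H : ℝ → ℝ := fun x => (φ ((A + B * x) / (1 + x)) - φ s) / ((A + B * x) / (1 + x) - s) with hHd
  have hH : ∀ x, H x = (φ ((A + B * x) / (1 + x)) - φ s) / ((A + B * x) / (1 + x) - s) :=
    fun x => rfl
  have hHm : Measurable H := by
    rw [hHd]
    have : Measurable (fun x : ℝ => (A + B * x) / (1 + x)) := by fun_prop
    exact ((hm.comp this).sub_const _).div (this.sub_const _)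
  have pos2 : ∀ᵐ q ∂((volume.restrict (Ioi (0:ℝ))).prod (volume.restrict (Ioi (0:ℝ)))),
      0 < q.1 ∧ 0 < q.2 := by
    filter_upwards [Measure.quasiMeasurePreserving_fst.ae (ae_restrict_mem measurableSet_Ioi),
      Measure.quasiMeasurePreserving_snd.ae (ae_restrict_mem measurableSet_Ioi)] with q a b
    exact ⟨a, b⟩
  have ki := cov_prod hAB (kker_int hs h0 h1 hC hγ hγ1 hφ hm)
  have ki2 : Integrable (fun p : ℝ × ℝ => (p.2 / p.1) ^ α * ((H p.1 - H p.2) /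
      ((1 + p.1) * (1 + p.2) * (p.1 - p.2))))
      ((volume.restrict (Ioi (0:ℝ))).prod (volume.restrict (Ioi (0:ℝ)))) := by
    refine (ki.const_mul (B - A)⁻¹).congr ?_
    filter_upwards [pos2] with q hq
    rw [kker_rho hAB hq.1 hq.2 hH, inv_mul_cancel_left₀ hD]
  have iW := (cov_integrable hAB _).1 (hW_int hs h0 h1 hC hγ hγ1 hφ hm)
  have iWi := (cov_integrable hAB _).1 (hWi_int hs h0 h1 hC hγ hγ1 hφ hm)
  have ih := (cov_integrable hAB _).1 (h_int hs hC hγ hφ hm)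
  have eW : ∀ x ∈ Ioi (0:ℝ), (B - A) / (1 + x) ^ 2 *
      ((φ ((A + B * x) / (1 + x)) - φ s) * ((B - (A + B * x) / (1 + x)) /
        ((A + B * x) / (1 + x) - A)) ^ α / ((A + B * x) / (1 + x) - s)) =
      (B - A) * (H x * x ^ (-α) / (1 + x) ^ 2) := by
    intro x hx
    have hx' : (0:ℝ) < x := hx
    rw [W_rho hAB hx', hH, Real.inv_rpow hx'.le, ← Real.rpow_neg hx'.le]
    ring
  have eWi : ∀ x ∈ Ioi (0:ℝ), (B - A) / (1 + x) ^ 2 *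
      ((φ ((A + B * x) / (1 + x)) - φ s) * (((A + B * x) / (1 + x) - A) /
        (B - (A + B * x) / (1 + x))) ^ α / ((A + B * x) / (1 + x) - s)) =
      (B - A) * (H x * x ^ α / (1 + x) ^ 2) := by
    intro x hx
    have hx' : (0:ℝ) < x := hx
    rw [W_rho' hAB hx', hH]
    ring
  have jW : IntegrableOn (fun x => H x * x ^ (-α) / (1 + x) ^ 2) (Ioi 0) := by
    refine IntegrableOn.congr_fun (iW.const_mul (B - A)⁻¹) ?_ measurableSet_Ioi
    intro x hx
    simp only
    rw [eW x hx, inv_mul_cancel_left₀ hD]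
  have jWi : IntegrableOn (fun x => H x * x ^ α / (1 + x) ^ 2) (Ioi 0) := by
    refine IntegrableOn.congr_fun (iWi.const_mul (B - A)⁻¹) ?_ measurableSet_Ioi
    intro x hx
    simp only
    rw [eWi x hx, inv_mul_cancel_left₀ hD]
  have jh : IntegrableOn (fun x => H x / (1 + x) ^ 2) (Ioi 0) := by
    refine IntegrableOn.congr_fun (ih.const_mul (B - A)⁻¹) ?_ measurableSet_Ioi
    intro x hx
    simp only
    rw [← hH]
    field_simp
  have ediff : (fun x => H x * (x ^ α - x ^ (-α)) / (1 + x) ^ 2) =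
      fun x => H x * x ^ α / (1 + x) ^ 2 - H x * x ^ (-α) / (1 + x) ^ 2 := by
    funext x
    ring
  have hl := half_line h0 (by linarith) hHm ki2 jh (by rw [ediff]; exact jWi.sub jW)
  rw [ediff, MeasureTheory.integral_sub jWi jW] at hl
  rw [cov_integral hAB (fun r => (φ r - φ s) * ((r - A) / (B - r)) ^ α / (r - s)),
    cov_integral hAB (fun r => (φ r - φ s) * ((B - r) / (r - A)) ^ α / (r - s)),
    setIntegral_congr_fun measurableSet_Ioi eW, setIntegral_congr_fun measurableSet_Ioi eWi,
    MeasureTheory.integral_const_mul, MeasureTheory.integral_const_mul, cov_integral hAB]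
  have e2 : ∀ y ∈ Ioi (0:ℝ), (B - A) / (1 + y) ^ 2 *
      (∫ r in Ioo A B, kker A B α s φ (r, (A + B * y) / (1 + y))) =
      (B - A) * ∫ x in Ioi (0:ℝ), (y / x) ^ α * ((H x - H y) / ((1 + x) * (1 + y) * (x - y))) := by
    intro y hy
    rw [cov_integral hAB, ← MeasureTheory.integral_const_mul, ← MeasureTheory.integral_const_mul]
    refine setIntegral_congr_fun measurableSet_Ioi ?_
    intro x hx
    simp only
    rw [← kker_rho hAB hx hy hH]
    ring
  rw [setIntegral_congr_fun measurableSet_Ioi e2, MeasureTheory.integral_const_mul, hl]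
  ring

theorem pvApprox_congr {A B s : ℝ} (hs : s ∈ Ioo A B) {f g : ℝ → ℝ}
    (h : ∀ r ∈ Ioo A B, f r = g r) :
    pvApprox A B f s =ᶠ[𝓝[>] (0:ℝ)] pvApprox A B g s := by
  filter_upwards [ev_small hs] with ε hε
  obtain ⟨a, b, c⟩ := hε
  unfold pvApprox
  have i1 : (∫ r in A..(s - ε), f r / (r - s)) = ∫ r in A..(s - ε), g r / (r - s) := by
    apply intervalIntegral.integral_congr_ae
    refine ae_of_all _ fun r hr => ?_
    rw [uIoc_of_le b.le] at hr
    rw [h r ⟨hr.1, by linarith [hr.2, hs.2]⟩]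
  have i2 : (∫ r in (s + ε)..B, f r / (r - s)) = ∫ r in (s + ε)..B, g r / (r - s) := by
    apply intervalIntegral.integral_congr_ae
    filter_upwards [Measure.ae_ne volume B] with r hB hr
    rw [uIoc_of_le c.le] at hr
    rw [h r ⟨by linarith [hr.1, hs.1], lt_of_le_of_ne hr.2 hB⟩]
  rw [i1, i2]

theorem pvApprox_tendsto_congr {A B s L : ℝ} (hs : s ∈ Ioo A B) {f g : ℝ → ℝ}
    (h : ∀ r ∈ Ioo A B, f r = g r) (hg : Tendsto (pvApprox A B g s) (𝓝[>] 0) (𝓝 L)) :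
    Tendsto (pvApprox A B f s) (𝓝[>] 0) (𝓝 L) :=
  hg.congr' (pvApprox_congr hs h).symm

theorem Hfin_eq {A B s L : ℝ} {f : ℝ → ℝ} (h : Tendsto (pvApprox A B f s) (𝓝[>] 0) (𝓝 L)) :
    Hfin A B f s = (1 / Real.pi) * L := by
  unfold Hfin pv
  rw [h.limUnder_eq]

/-- The regular part of the weighted principal value. -/
noncomputable def TT (A B α : ℝ) (φ : ℝ → ℝ) (t : ℝ) : ℝ :=
  ∫ r in Ioo A B, (φ r - φ t) * ((B - r) / (r - A)) ^ α / (r - t)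

theorem pv_Wphi {A B α t C γ : ℝ} {φ : ℝ → ℝ} (ht : t ∈ Ioo A B) (h0 : 0 < α)
    (h1 : α < 1 / 2) (hC : 0 ≤ C) (hγ : 0 < γ) (hγ1 : γ ≤ 1)
    (hφ : ∀ x y, |φ x - φ y| ≤ C * |x - y| ^ γ) (hm : Measurable φ) :
    Tendsto (pvApprox A B (fun r => ((B - r) / (r - A)) ^ α * φ r) t) (𝓝[>] 0)
      (𝓝 (φ t * (((B - t) / (t - A)) ^ α * (Real.pi * Real.cot (Real.pi * α)) -
        Real.pi / Real.sin (Real.pi * α)) + TT A B α φ t)) := by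
  have hAB : A < B := ht.1.trans ht.2
  have := pv_mul ht (u := fun r => ((B - r) / (r - A)) ^ α) (v := φ) (c := φ t)
    ((ii_iff hAB _).2 (W_int h0 h1)) (pv_W ht h0 h1)
    ((ii_iff hAB _).2 (hW_int ht h0 h1 hC hγ hγ1 hφ hm))
  rw [ii_int hAB] at this
  refine pvApprox_tendsto_congr ht ?_ this
  intro r _
  ring

theorem TT_diff {A B α s t C γ : ℝ} {φ : ℝ → ℝ} (hs : s ∈ Ioo A B) (ht : t ∈ Ioo A B) (hts : t ≠ s)
    (h0 : 0 < α)
    (h1 : α < 1 / 2) (hC : 0 ≤ C) (hγ : 0 < γ) (hγ1 : γ ≤ 1)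
    (hφ : ∀ x y, |φ x - φ y| ≤ C * |x - y| ^ γ) (hm : Measurable φ) :
    (TT A B α φ t - TT A B α φ s) * ((t - A) / (B - t)) ^ α / (t - s) =
      ∫ r in Ioo A B, kker A B α s φ (r, t) := by
  unfold TT
  rw [← MeasureTheory.integral_sub (hW_int ht h0 h1 hC hγ hγ1 hφ hm)
    (hW_int hs h0 h1 hC hγ hγ1 hφ hm), mul_div_assoc, ← MeasureTheory.integral_mul_const]
  apply MeasureTheory.integral_congr_ae
  filter_upwards [ae_mem_ne A B s, ae_mem_ne A B t] with r hr1 hr2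
  have a1 : r - s ≠ 0 := sub_ne_zero.2 hr1.2
  have a2 : r - t ≠ 0 := sub_ne_zero.2 hr2.2
  have a3 : t - s ≠ 0 := sub_ne_zero.2 hts
  simp only [kker]
  generalize ((B - r) / (r - A)) ^ α = w
  generalize ((t - A) / (B - t)) ^ α = w'
  field_simp
  ring

/-- Core computation, for globally Hölder data. -/
theorem core {A B α s C γ : ℝ} {φ ψ : ℝ → ℝ} (hs : s ∈ Ioo A B) (h0 : 0 < α)
    (h1 : α < 1 / 2) (hC : 0 ≤ C) (hγ : 0 < γ) (hγ1 : γ ≤ 1)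
    (hφ : ∀ x y, |φ x - φ y| ≤ C * |x - y| ^ γ) (hm : Measurable φ)
    (hψ : ∀ s ∈ Ioo A B, ψ s = Real.cos (Real.pi * α) ^ 2 * φ s -
        Real.sin (Real.pi * α) * Real.cos (Real.pi * α) * ((s - A) / (B - s)) ^ α *
          Hfin A B (fun r => ((B - r) / (r - A)) ^ α * φ r) s) :
    ∃ L : ℝ, Tendsto (pvApprox A B ψ s) (𝓝[>] 0) (𝓝 L) ∧
      ψ s + Real.tan (Real.pi * α) * ((1 / Real.pi) * L) = φ s := by
  have hAB : A < B := hs.1.trans hs.2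
  have hpi := Real.pi_pos
  have hsin : 0 < Real.sin (Real.pi * α) :=
    Real.sin_pos_of_pos_of_lt_pi (by positivity) (by nlinarith)
  have hcos : 0 < Real.cos (Real.pi * α) :=
    Real.cos_pos_of_mem_Ioo ⟨by nlinarith, by nlinarith⟩
  have hsc := Real.sin_sq_add_cos_sq (Real.pi * α)
  have hcot : Real.cot (Real.pi * α) = Real.cos (Real.pi * α) / Real.sin (Real.pi * α) :=
    Real.cot_eq_cos_div_sin _
  have htan : Real.tan (Real.pi * α) = Real.sin (Real.pi * α) / Real.cos (Real.pi * α) :=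
    Real.tan_eq_sin_div_cos _
  have I0 := kker_integral hs h0 h1 hC hγ hγ1 hφ hm
  have kint := kker_int hs h0 h1 hC hγ hγ1 hφ hm
  have TTs : (∫ r in Ioo A B, (φ r - φ s) * ((B - r) / (r - A)) ^ α / (r - s)) = TT A B α φ s := rfl
  rw [TTs] at I0
  have hpW := fun t (ht : t ∈ Ioo A B) => Hfin_eq (pv_Wphi ht h0 h1 hC hγ hγ1 hφ hm)
  have hpWi := pv_Winv hs h0 h1
  have iWi := hWi_int hs h0 h1 hC hγ hγ1 hφ hm
  rw [hcot] at hpWi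
  simp_rw [hcot] at hpW
  rw [htan]
  set S := Real.sin (Real.pi * α) with hS
  set K := Real.cos (Real.pi * α) with hK
  set v : ℝ → ℝ := fun t => K * (φ t - S / Real.pi * TT A B α φ t) with hv
  have psi_eq : ∀ t ∈ Ioo A B, ψ t = v t * ((t - A) / (B - t)) ^ α := by
    intro t ht
    rw [hψ t ht, hpW t ht]
    have q1 : 0 < (t - A) / (B - t) := div_pos (by linarith [ht.1]) (by linarith [ht.2])
    have e : ((B - t) / (t - A)) ^ α = (((t - A) / (B - t)) ^ α)⁻¹ := by
      rw [← Real.inv_rpow q1.le, inv_div]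
    rw [e]
    have hw := Real.rpow_pos_of_pos q1 α
    simp only [hv]
    generalize ((t - A) / (B - t)) ^ α = w at hw
    have : K ^ 2 * φ t - S * K * w * (1 / Real.pi * (φ t * (w⁻¹ * (Real.pi * (K / S)) -
        Real.pi / S) + TT A B α φ t)) - K * (φ t - S / Real.pi * TT A B α φ t) * w = 0 := by
      field_simp
      ring
    linarith
  -- integrability of the regular part
  have kT : IntegrableOn (fun t => (TT A B α φ t - TT A B α φ s) * ((t - A) / (B - t)) ^ α / (t - s))
      (Ioo A B) := by
    have := kint.integral_prod_right
    refine Integrable.congr this ?_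
    filter_upwards [ae_mem_ne A B s] with t ht
    rw [TT_diff hs ht.1 ht.2 h0 h1 hC hγ hγ1 hφ hm]
  have kI : ∫ t in Ioo A B, (TT A B α φ t - TT A B α φ s) * ((t - A) / (B - t)) ^ α / (t - s) =
      ∫ t in Ioo A B, ∫ r in Ioo A B, kker A B α s φ (r, t) := by
    apply MeasureTheory.integral_congr_ae
    filter_upwards [ae_mem_ne A B s] with t ht
    rw [TT_diff hs ht.1 ht.2 h0 h1 hC hγ hγ1 hφ hm]
  have edec : (fun t => (v t - v s) * ((t - A) / (B - t)) ^ α / (t - s)) =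
      fun t => K * ((φ t - φ s) * ((t - A) / (B - t)) ^ α / (t - s)) - K * (S / Real.pi) *
        ((TT A B α φ t - TT A B α φ s) * ((t - A) / (B - t)) ^ α / (t - s)) := by
    funext t
    simp only [hv]
    ring
  have vint : IntegrableOn (fun t => (v t - v s) * ((t - A) / (B - t)) ^ α / (t - s)) (Ioo A B) := by
    rw [edec]
    exact (iWi.const_mul K).sub (kT.const_mul _)
  have pvv := pv_mul hs (u := fun t => ((t - A) / (B - t)) ^ α) (v := v) (c := v s)
    ((ii_iff hAB _).2 (Wi_int h0 h1)) hpWi ((ii_iff hAB _).2 vint)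
  rw [ii_int hAB, edec, MeasureTheory.integral_sub (iWi.const_mul K) (kT.const_mul _),
    MeasureTheory.integral_const_mul, MeasureTheory.integral_const_mul, kI, I0] at pvv
  refine ⟨_, pvApprox_tendsto_congr hs psi_eq pvv, ?_⟩
  rw [psi_eq s hs]
  simp only [hv]
  generalize (∫ r in Ioo A B, (φ r - φ s) * ((r - A) / (B - r)) ^ α / (r - s)) = J
  generalize ((s - A) / (B - s)) ^ α = w
  generalize TT A B α φ s = τ
  field_simp
  ring

theorem main_core (A B : ℝ) (hAB : A < B)
    (α : ℝ) (hα : α ∈ Set.Ioo (0 : ℝ) (1/2)) (φ : ℝ → ℝ)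
    (γ : ℝ) (hγ : γ ∈ Set.Ioc (0 : ℝ) 1) (C : ℝ) (hC : 0 ≤ C)
    (hφHolder : ∀ r ∈ Set.Icc A B, ∀ r' ∈ Set.Icc A B, |φ r - φ r'| ≤ C * |r - r'| ^ γ)
    (ψ : ℝ → ℝ)
    (hψ : ∀ s : ℝ, ψ s = Real.cos (Real.pi * α) ^ 2 * φ s -
        Real.sin (Real.pi * α) * Real.cos (Real.pi * α) * ((s - A) / (B - s)) ^ α *
          Hfin A B (fun r => ((B - r) / (r - A)) ^ α * φ r) s) :
    ∀ s ∈ Set.Ioo A B,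
      (∃ L : ℝ, Tendsto (pvApprox A B (fun r => ((B - r) / (r - A)) ^ α * φ r) s)
        (𝓝[>] 0) (𝓝 L)) ∧
      (∃ L : ℝ, Tendsto (pvApprox A B ψ s) (𝓝[>] 0) (𝓝 L)) ∧
      ψ s + Real.tan (Real.pi * α) * Hfin A B ψ s = φ s := by
  intro s hs
  obtain ⟨h0, h1⟩ := hα
  obtain ⟨g0, g1⟩ := hγ
  set cl : ℝ → ℝ := fun x => max A (min B x) with hcl
  set χ : ℝ → ℝ := fun x => φ (cl x) with hχ
  have clmem : ∀ x, cl x ∈ Icc A B := fun x =>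
    ⟨le_max_left _ _, max_le hAB.le (min_le_left _ _)⟩
  have clid : ∀ x ∈ Ioo A B, cl x = x := by
    intro x hx
    simp only [hcl]
    rw [min_eq_right hx.2.le, max_eq_right hx.1.le]
  have cllip : ∀ x y, |cl x - cl y| ≤ |x - y| := by
    intro x y
    simp only [hcl]
    refine (abs_max_sub_max_le_max A _ A _).trans (max_le (by simp) ?_)
    exact (abs_min_sub_min_le_max B _ B _).trans (max_le (by simp) le_rfl)
  have hhol : ∀ x y, |χ x - χ y| ≤ C * |x - y| ^ γ := by
    intro x y
    refine (hφHolder _ (clmem x) _ (clmem y)).trans ?_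
    apply mul_le_mul_of_nonneg_left _ hC
    exact Real.rpow_le_rpow (abs_nonneg _) (cllip x y) g0.le
  have hcont : Continuous χ := by
    rw [continuous_iff_continuousAt]
    intro x
    rw [ContinuousAt, tendsto_iff_dist_tendsto_zero]
    have lim : Tendsto (fun y => C * |y - x| ^ γ) (𝓝 x) (𝓝 0) := by
      have : Continuous (fun y : ℝ => C * |y - x| ^ γ) := by
        refine continuous_const.mul (Continuous.rpow_const (by fun_prop) fun _ => Or.inr g0.le)
      have := this.tendsto x
      simpa [Real.zero_rpow g0.ne'] using this
    refine squeeze_zero (fun _ => dist_nonneg) (fun y => ?_) lim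
    rw [Real.dist_eq]
    exact hhol y x
  have hm := hcont.measurable
  have heq : ∀ x ∈ Ioo A B, φ x = χ x := by
    intro x hx
    simp only [hχ]
    rw [clid x hx]
  have heq2 : ∀ r ∈ Ioo A B, ((B - r) / (r - A)) ^ α * φ r = ((B - r) / (r - A)) ^ α * χ r := by
    intro r hr
    rw [heq r hr]
  have hW := fun t (ht : t ∈ Ioo A B) => pv_Wphi ht h0 h1 hC g0 g1 hhol hm
  have hW2 := fun t (ht : t ∈ Ioo A B) => pvApprox_tendsto_congr ht heq2 (hW t ht)
  obtain ⟨L, hL, hfin⟩ := core (ψ := ψ) hs h0 h1 hC g0 g1 hhol hm (by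
    intro t ht
    rw [hψ t, Hfin_eq (hW t ht), Hfin_eq (hW2 t ht), heq t ht])
  refine ⟨⟨_, hW2 s hs⟩, ⟨L, hL⟩, ?_⟩
  rw [Hfin_eq hL, hfin, heq s hs]

end helpers

/-- Inversion of `L_α[ψ] = ψ + tan(πα) H[ψ]` with constant coefficient `α ∈ (0,1/2)`:
`ψ = cos²(πα)φ − sin(πα)cos(πα)((s−A)/(B−s))^α H[((B−·)/(·−A))^α φ]` satisfies
`L_α[ψ] = φ` on `(A,B)`, all principal values involved existing. -/
theorem inversion_formula_constant_coefficient (A B : ℝ) (hAB : A < B)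
    (α : ℝ) (hα : α ∈ Set.Ioo (0 : ℝ) (1/2)) (φ : ℝ → ℝ)
    (γ : ℝ) (hγ : γ ∈ Set.Ioc (0 : ℝ) 1) (C : ℝ) (hC : 0 ≤ C)
    (hφHolder : ∀ r ∈ Set.Icc A B, ∀ r' ∈ Set.Icc A B, |φ r - φ r'| ≤ C * |r - r'| ^ γ)
    (ψ : ℝ → ℝ)
    (hψ : ∀ s : ℝ, ψ s = Real.cos (Real.pi * α) ^ 2 * φ s -
        Real.sin (Real.pi * α) * Real.cos (Real.pi * α) * ((s - A) / (B - s)) ^ α *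
          Hfin A B (fun r => ((B - r) / (r - A)) ^ α * φ r) s) :
    ∀ s ∈ Set.Ioo A B,
      (∃ L : ℝ, Tendsto (pvApprox A B (fun r => ((B - r) / (r - A)) ^ α * φ r) s)
        (𝓝[>] 0) (𝓝 L)) ∧
      (∃ L : ℝ, Tendsto (pvApprox A B ψ s) (𝓝[>] 0) (𝓝 L)) ∧
      ψ s + Real.tan (Real.pi * α) * Hfin A B ψ s = φ s :=
  main_core A B hAB α hα φ γ hγ C hC hφHolder ψ hψ
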